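/- Let 1 ≤ s ≤ ∞. There exists a constant C > 0 such that for every Schwartz function σ on ℝ^{2d} and every Schwartz function f on ℝ^d one has ‖L_σ f‖_{W(L²,L^s)} ≤ C · ‖σ‖_{M^{∞,1}} · ‖f‖_{W(L²,L^s)}. (Weyl operators with symbols in the Sjöstrand class M^{∞,1} are bounded on W(L²,L^s), uniformly in s-compatible norm.) -/

import Mathlib

open MeasureTheory SchwartzMap Complex ENNReal NNReal

noncomputable section

/-- Mixed `L^p`-type norm of an `ℝ≥0∞`-valued function, with the usual
`essSup` modification when `p = ∞`. -/
def lqNorm {α : Type*} [MeasurableSpace α] (μ : Measure α) (p : ℝ≥0∞)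
    (f : α → ℝ≥0∞) : ℝ≥0∞ :=
  if p = ∞ then essSup f μ else (∫⁻ a, f a ^ p.toReal ∂μ) ^ (1 / p.toReal)

/-- Conjugate exponent in `ℝ≥0∞` : `1/p + 1/p' = 1`, with `1' = ∞`, `∞' = 1`. -/
def dualExp (p : ℝ≥0∞) : ℝ≥0∞ :=
  if p = 1 then ∞ else if p = ∞ then 1 else ENNReal.ofReal (p.toReal / (p.toReal - 1))

/-- `1/p` as a real number, with the convention `1/∞ = 0`. -/
def invR (p : ℝ≥0∞) : ℝ := (p⁻¹).toReal

/-- The Gaussian window `G(t) = exp(-π |t|²)` (as a complex-valued function). -/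
def gaussWin {ι : Type*} [Fintype ι] (t : EuclideanSpace ℝ ι) : ℂ :=
  Complex.exp (-(Real.pi * ‖t‖ ^ 2))

/-- Short-time Fourier transform with Gaussian window:
`V_G F (x, ω) = ∫ F t * conj (G (t - x)) * exp (-2πi ω⬝t) dt`. -/
def STFT {ι : Type*} [Fintype ι] (F : EuclideanSpace ℝ ι → ℂ)
    (x ω : EuclideanSpace ℝ ι) : ℂ :=
  ∫ t, F t * (starRingEnd ℂ) (gaussWin (t - x)) *
    Complex.exp (Complex.I * (-(2 * Real.pi * (inner ℝ ω t : ℝ))))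

/-- Modulation space norm `M^{p,q}`. -/
def modNorm {ι : Type*} [Fintype ι] (p q : ℝ≥0∞)
    (F : EuclideanSpace ℝ ι → ℂ) : ℝ≥0∞ :=
  lqNorm volume q fun ω => lqNorm volume p fun x => (‖STFT F x ω‖₊ : ℝ≥0∞)

/-- Wiener amalgam norm `W(𝓕 L^p, L^q)` (local component Fourier–Lebesgue). -/
def wFLNorm {ι : Type*} [Fintype ι] (p q : ℝ≥0∞)
    (F : EuclideanSpace ℝ ι → ℂ) : ℝ≥0∞ :=
  lqNorm volume q fun x => lqNorm volume p fun ω => (‖STFT F x ω‖₊ : ℝ≥0∞)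

/-- The unit cube `[0,1)^d`. -/
def unitCube (d : ℕ) : Set (EuclideanSpace ℝ (Fin d)) :=
  {x | ∀ i, x i ∈ Set.Ico (0 : ℝ) 1}

/-- Wiener amalgam norm
`‖f‖_{W(L^r,L^s)} = ( Σ_{n ∈ ℤ^d} ( ∫_{[0,1)^d} |f(x+n)|^r dx )^{s/r} )^{1/s}`. -/
def wNorm (d : ℕ) (r s : ℝ≥0∞) (f : EuclideanSpace ℝ (Fin d) → ℂ) : ℝ≥0∞ :=
  lqNorm (Measure.count : Measure (Fin d → ℤ)) s fun n =>
    lqNorm (volume.restrict (unitCube d)) r fun x =>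
      (‖f (x + show EuclideanSpace ℝ (Fin d) from WithLp.toLp 2 fun i => (n i : ℝ))‖₊ : ℝ≥0∞)

/-- Pairing `(x, ω) ∈ ℝ^d × ℝ^d ↦ ℝ^{2d}`. -/
def pairE {d : ℕ} (x ω : EuclideanSpace ℝ (Fin d)) :
    EuclideanSpace ℝ (Fin d ⊕ Fin d) :=
  WithLp.toLp 2 fun i => Sum.elim (fun j => x j) (fun j => ω j) i

/-- First (space) component of a point of `ℝ^{2d}`. -/
def xpart {d : ℕ} (z : EuclideanSpace ℝ (Fin d ⊕ Fin d)) :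
    EuclideanSpace ℝ (Fin d) := WithLp.toLp 2 fun i => z (Sum.inl i)

/-- Second (frequency) component of a point of `ℝ^{2d}`. -/
def wpart {d : ℕ} (z : EuclideanSpace ℝ (Fin d ⊕ Fin d)) :
    EuclideanSpace ℝ (Fin d) := WithLp.toLp 2 fun i => z (Sum.inr i)

/-- Fourier transform `f̂(ω) = ∫ f t e^{-2πi t⬝ω} dt`. -/
def fTrans {ι : Type*} [Fintype ι] (f : EuclideanSpace ℝ ι → ℂ)
    (ω : EuclideanSpace ℝ ι) : ℂ :=
  ∫ t, f t * Complex.exp (Complex.I * (-(2 * Real.pi * (inner ℝ t ω : ℝ))))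

/-- Kohn–Nirenberg operator `a(x,D) f (x) = ∫ a(x,ω) f̂(ω) e^{2πi x⬝ω} dω`. -/
def KNop {d : ℕ} (a : EuclideanSpace ℝ (Fin d ⊕ Fin d) → ℂ)
    (f : EuclideanSpace ℝ (Fin d) → ℂ) (x : EuclideanSpace ℝ (Fin d)) : ℂ :=
  ∫ ω, a (pairE x ω) * fTrans f ω *
    Complex.exp (Complex.I * (2 * Real.pi * (inner ℝ x ω : ℝ)))

/-- Weyl operator `L_σ f (x) = ∫∫ e^{2πi (x-y)⬝ω} σ((x+y)/2, ω) f(y) dy dω`. -/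
def weylOp {d : ℕ} (σ : EuclideanSpace ℝ (Fin d ⊕ Fin d) → ℂ)
    (f : EuclideanSpace ℝ (Fin d) → ℂ) (x : EuclideanSpace ℝ (Fin d)) : ℂ :=
  ∫ y, ∫ ω, Complex.exp (Complex.I * (2 * Real.pi * (inner ℝ (x - y) ω : ℝ))) *
    σ (pairE ((2 : ℝ)⁻¹ • (x + y)) ω) * f y

/-- Cross-Wigner distribution
`W(g,f)(x,ω) = ∫ g(x+t/2) conj(f(x−t/2)) e^{−2πi ω⬝t} dt`. -/
def wigner {d : ℕ} (g f : EuclideanSpace ℝ (Fin d) → ℂ)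
    (z : EuclideanSpace ℝ (Fin d ⊕ Fin d)) : ℂ :=
  ∫ t, g (xpart z + (2 : ℝ)⁻¹ • t) * (starRingEnd ℂ) (f (xpart z - (2 : ℝ)⁻¹ • t)) *
    Complex.exp (Complex.I * (-(2 * Real.pi * (inner ℝ (wpart z) t : ℝ))))

end

/-!
Averaging the Gaussian time-frequency atoms against the short-time Fourier transform `V σ (w, ζ)`
reconstructs a multiple of the symbol `σ`, and the Weyl operator of the atom at `(w, ζ)` is itself
explicit: it tests `f` against a Gaussian at `w₁ + ζ₂ / 2` and returns a Gaussian at `w₁ - ζ₂ / 2`.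
For fixed `ζ` and `w₁`, integrating over the remaining variable `w₂` is an inverse Fourier
transform, so Plancherel bounds the result in `L²` by `sup_w |V σ (w, ζ)|` times the `L²` norm of
`f` times a Gaussian at `w₁ + ζ₂ / 2`. Localizing to unit cubes, the `L²` norms of `L_σ f` over the
cubes are dominated by a matrix applied to those of `f`. Its rows and columns sum to a constant
times `∫ sup_w |V σ (w, ζ)| dζ`, which is the `M^{∞,1}` norm of `σ`, and Schur's test gives the
bound on every `ℓ^s`.
-/

open scoped FourierTransform RealInnerProductSpace

section LpNorms

variable {α β : Type*} [MeasurableSpace α] [MeasurableSpace β] {μ : Measure α} {ν : Measure β}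

theorem lqNorm_eq_eLpNorm {p : ℝ≥0∞} (hp : p ≠ 0) (f : α → ℝ≥0∞) :
    lqNorm μ p f = eLpNorm f p μ := by
  unfold lqNorm
  split_ifs with htop
  · simp [htop, eLpNorm_exponent_top, eLpNormEssSup]
  · simp [eLpNorm_eq_lintegral_rpow_enorm_toReal hp htop]

theorem lintegral_rpow_le_measure_univ_rpow_mul {r : ℝ} (hr : 1 ≤ r) {f : α → ℝ≥0∞}
    (hf : Measurable f) :
    (∫⁻ x, f x ∂μ) ^ r ≤ μ Set.univ ^ (r - 1) * ∫⁻ x, f x ^ r ∂μ := by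
  have hr0 : 0 < r := by linarith
  have hJensen := eLpNorm'_le_eLpNorm'_mul_rpow_measure_univ one_pos hr
    hf.aestronglyMeasurable (μ := μ)
  simp only [eLpNorm', enorm_eq_self, ENNReal.rpow_one, div_one] at hJensen
  calc (∫⁻ x, f x ∂μ) ^ r
      ≤ ((∫⁻ x, f x ^ r ∂μ) ^ (1 / r) * μ Set.univ ^ (1 - 1 / r)) ^ r := by gcongr
    _ = μ Set.univ ^ (r - 1) * ∫⁻ x, f x ^ r ∂μ := by
      rw [ENNReal.mul_rpow_of_nonneg _ _ hr0.le, ← ENNReal.rpow_mul, ← ENNReal.rpow_mul,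
        one_div_mul_cancel hr0.ne', ENNReal.rpow_one, mul_comm]
      congr 2
      field_simp

theorem lintegral_mul_rpow_le {r : ℝ} (hr : 1 ≤ r) {k f : α → ℝ≥0∞} (hk : Measurable k)
    (hf : Measurable f) :
    (∫⁻ x, k x * f x ∂μ) ^ r ≤ (∫⁻ x, k x ∂μ) ^ (r - 1) * ∫⁻ x, k x * f x ^ r ∂μ := by
  have hJensen := lintegral_rpow_le_measure_univ_rpow_mul hr hf (μ := μ.withDensity k)
  rwa [lintegral_withDensity_eq_lintegral_mul _ hk hf,
    lintegral_withDensity_eq_lintegral_mul _ hk (hf.pow_const r),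
    withDensity_apply _ MeasurableSet.univ, setLIntegral_univ] at hJensen

theorem eLpNorm_top_lintegral_mul_le {K : α → β → ℝ≥0∞} (hK : ∀ x, Measurable (K x)) {A : ℝ≥0∞}
    (hrow : ∀ x, ∫⁻ y, K x y ∂ν ≤ A) (f : β → ℝ≥0∞) :
    eLpNorm (fun x ↦ ∫⁻ y, K x y * f y ∂ν) ∞ μ ≤ A * eLpNorm f ∞ ν := by
  rw [eLpNorm_exponent_top]
  refine essSup_le_of_ae_le _ (.of_forall fun x ↦ ?_)
  calc ∫⁻ y, K x y * f y ∂ν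
      ≤ ∫⁻ y, K x y * eLpNorm f ∞ ν ∂ν := by
        refine lintegral_mono_ae ?_
        filter_upwards [ae_le_eLpNormEssSup (f := f) (μ := ν)] with y hy
        gcongr
        simpa using hy
    _ = (∫⁻ y, K x y ∂ν) * eLpNorm f ∞ ν := lintegral_mul_const _ (hK x)
    _ ≤ A * eLpNorm f ∞ ν := by
        gcongr
        exact hrow x

theorem lintegral_lintegral_mul_rpow_le [SFinite μ] [SFinite ν] {K : α → β → ℝ≥0∞}
    (hK : Measurable (Function.uncurry K)) {A : ℝ≥0∞} (hrow : ∀ x, ∫⁻ y, K x y ∂ν ≤ A)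
    (hcol : ∀ y, ∫⁻ x, K x y ∂μ ≤ A) {r : ℝ} (hr : 1 ≤ r) {f : β → ℝ≥0∞} (hf : Measurable f) :
    ∫⁻ x, (∫⁻ y, K x y * f y ∂ν) ^ r ∂μ ≤ A ^ r * ∫⁻ y, f y ^ r ∂ν := by
  have hfr : Measurable fun y ↦ f y ^ r := hf.pow_const r
  calc ∫⁻ x, (∫⁻ y, K x y * f y ∂ν) ^ r ∂μ
      ≤ ∫⁻ x, A ^ (r - 1) * ∫⁻ y, K x y * f y ^ r ∂ν ∂μ := by
        refine lintegral_mono fun x ↦ ?_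
        refine (lintegral_mul_rpow_le hr hK.of_uncurry_left hf).trans ?_
        gcongr
        exact hrow x
    _ = A ^ (r - 1) * ∫⁻ y, (∫⁻ x, K x y ∂μ) * f y ^ r ∂ν := by
        rw [lintegral_const_mul _ (by fun_prop), lintegral_lintegral_swap (by fun_prop)]
        congr with y
        exact lintegral_mul_const _ hK.of_uncurry_right
    _ ≤ A ^ (r - 1) * ∫⁻ y, A * f y ^ r ∂ν := by
        gcongr with y
        exact hcol y
    _ = A ^ r * ∫⁻ y, f y ^ r ∂ν := by
        rw [lintegral_const_mul _ hfr, ← mul_assoc]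
        congr 1
        conv_lhs => rw [← ENNReal.rpow_one A, ← ENNReal.rpow_mul, one_mul,
          ← ENNReal.rpow_add_of_nonneg _ _ (by linarith) zero_le_one, sub_add_cancel]

theorem eLpNorm_lintegral_mul_le_of_schur [SFinite μ] [SFinite ν] {K : α → β → ℝ≥0∞}
    (hK : Measurable (Function.uncurry K)) {A : ℝ≥0∞} (hrow : ∀ x, ∫⁻ y, K x y ∂ν ≤ A)
    (hcol : ∀ y, ∫⁻ x, K x y ∂μ ≤ A) {p : ℝ≥0∞} (hp : 1 ≤ p) {f : β → ℝ≥0∞}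
    (hf : Measurable f) :
    eLpNorm (fun x ↦ ∫⁻ y, K x y * f y ∂ν) p μ ≤ A * eLpNorm f p ν := by
  obtain rfl | hp_top := eq_or_ne p ∞
  · exact eLpNorm_top_lintegral_mul_le (fun x ↦ hK.of_uncurry_left) hrow f
  have hp0 : p ≠ 0 := (zero_lt_one.trans_le hp).ne'
  have hr : 1 ≤ p.toReal := by simpa using ENNReal.toReal_mono hp_top hp
  have hr0 : 0 < p.toReal := zero_lt_one.trans_le hr
  simp only [eLpNorm_eq_lintegral_rpow_enorm_toReal hp0 hp_top, enorm_eq_self]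
  calc (∫⁻ x, (∫⁻ y, K x y * f y ∂ν) ^ p.toReal ∂μ) ^ (1 / p.toReal)
      ≤ (A ^ p.toReal * ∫⁻ y, f y ^ p.toReal ∂ν) ^ (1 / p.toReal) := by
        gcongr
        exact lintegral_lintegral_mul_rpow_le hK hrow hcol hr hf
    _ = A * (∫⁻ y, f y ^ p.toReal ∂ν) ^ (1 / p.toReal) := by
        rw [ENNReal.mul_rpow_of_nonneg _ _ (by positivity), ← ENNReal.rpow_mul,
          mul_one_div_cancel hr0.ne', ENNReal.rpow_one]

theorem eLpNorm_two_sq {ε : Type*} [ENorm ε] (f : α → ε) :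
    eLpNorm f 2 μ ^ 2 = ∫⁻ x, ‖f x‖ₑ ^ 2 ∂μ := by
  rw [eLpNorm_eq_lintegral_rpow_enorm_toReal two_ne_zero ofNat_ne_top, ← ENNReal.rpow_natCast,
    ← ENNReal.rpow_mul]
  simp

theorem lintegral_mul_le_eLpNorm_two_mul {f g : α → ℝ≥0∞} (hf : AEMeasurable f μ)
    (hg : AEMeasurable g μ) :
    ∫⁻ x, f x * g x ∂μ ≤ eLpNorm f 2 μ * eLpNorm g 2 μ := by
  have h := ENNReal.lintegral_mul_le_Lp_mul_Lq μ Real.HolderConjugate.two_two hf hg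
  simpa [eLpNorm_eq_lintegral_rpow_enorm_toReal] using h

theorem measurable_eLpNorm_two [SFinite μ] {F : α → β → ℝ≥0∞}
    (hF : Measurable (Function.uncurry F)) : Measurable fun y ↦ eLpNorm (F · y) 2 μ := by
  simp only [eLpNorm_eq_lintegral_rpow_enorm_toReal two_ne_zero ofNat_ne_top, enorm_eq_self]
  fun_prop

/-- For the exponent `2`, Minkowski's integral inequality follows from the Cauchy–Schwarz inequality
under the double integral of the square, without dividing by a possibly infinite norm. -/
theorem eLpNorm_two_lintegral_le_lintegral_eLpNorm [SFinite μ] [SFinite ν] {F : α → β → ℝ≥0∞}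
    (hF : Measurable (Function.uncurry F)) :
    eLpNorm (fun x ↦ ∫⁻ y, F x y ∂ν) 2 μ ≤ ∫⁻ y, eLpNorm (F · y) 2 μ ∂ν := by
  have hFx : ∀ x, Measurable (F x) := fun x ↦ hF.of_uncurry_left
  have hFy : ∀ y, Measurable (F · y) := fun y ↦ hF.of_uncurry_right
  have hnorm := measurable_eLpNorm_two (μ := μ) hF
  rw [← ENNReal.pow_le_pow_left_iff two_ne_zero]
  calc eLpNorm (fun x ↦ ∫⁻ y, F x y ∂ν) 2 μ ^ 2
      = ∫⁻ x, ∫⁻ y, ∫⁻ z, F x y * F x z ∂ν ∂ν ∂μ := by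
        rw [eLpNorm_two_sq]
        simp only [enorm_eq_self, lintegral_const_mul _ (hFx _), lintegral_mul_const _ (hFx _), sq]
    _ = ∫⁻ y, ∫⁻ z, ∫⁻ x, F x y * F x z ∂μ ∂ν ∂ν := by
        rw [lintegral_lintegral_swap (by fun_prop)]
        exact lintegral_congr fun y ↦ lintegral_lintegral_swap (by fun_prop)
    _ ≤ ∫⁻ y, ∫⁻ z, eLpNorm (F · y) 2 μ * eLpNorm (F · z) 2 μ ∂ν ∂ν := by
        gcongr with y z
        exact lintegral_mul_le_eLpNorm_two_mul (hFy y).aemeasurable (hFy z).aemeasurable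
    _ = (∫⁻ y, eLpNorm (F · y) 2 μ ∂ν) ^ 2 := by
        simp only [lintegral_const_mul _ hnorm, lintegral_mul_const _ hnorm, sq]

end LpNorms

section Fourier

variable {V : Type*} [NormedAddCommGroup V] [InnerProductSpace ℝ V] [FiniteDimensional ℝ V]
  [MeasurableSpace V] [BorelSpace V]

theorem continuous_fourier_of_integrable {h : V → ℂ} (hh : Integrable h) : Continuous (𝓕 h) :=
  VectorFourier.fourierIntegral_continuous (L := innerₗ V) Real.continuous_fourierChar
    continuous_inner hh

theorem fourier_ae_eq_fourier_toLp {h : V → ℂ} (hh : Integrable h) (hh₂ : MemLp h 2) :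
    𝓕 h =ᵐ[volume] (𝓕 (hh₂.toLp h) : Lp ℂ 2 (volume : Measure V)) := by
  refine ae_eq_of_integral_contDiff_smul_eq
    (continuous_fourier_of_integrable hh).locallyIntegrable
    ((Lp.memLp _).locallyIntegrable (by norm_num)) fun g hg hg_supp ↦ ?_
  let g' : 𝓢(V, ℂ) := HasCompactSupport.toSchwartzMap (f := fun x ↦ (g x : ℂ))
    (hg_supp.comp_left (g := fun r : ℝ ↦ (r : ℂ)) Complex.ofReal_zero)
    (Complex.ofRealCLM.contDiff.comp hg)
  have hg' : ∀ x, g' x = g x := fun x ↦ rfl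
  have hdual : ∫ x, 𝓕 g' x • h x = ∫ x, g' x • 𝓕 h x := by
    have := VectorFourier.integral_fourierIntegral_smul_eq_flip (L := innerₗ V)
      Real.continuous_fourierChar continuous_inner g'.integrable hh (μ := volume) (ν := volume)
    rwa [flip_innerₗ] at this
  have htemp := congrArg (fun T ↦ T g') (Lp.fourier_toTemperedDistribution_eq (hh₂.toLp h))
  simp only [TemperedDistribution.fourier_apply, Lp.toTemperedDistribution_apply] at htemp
  have hLp : ∫ x, 𝓕 g' x • hh₂.toLp h x = ∫ x, 𝓕 g' x • h x := by
    refine integral_congr_ae ?_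
    filter_upwards [hh₂.coeFn_toLp] with x hx
    rw [hx]
  rw [hLp, hdual] at htemp
  simpa only [hg', smul_eq_mul, Complex.real_smul] using htemp

theorem eLpNorm_two_fourier_le {h : V → ℂ} (hh : Integrable h) :
    eLpNorm (𝓕 h) 2 ≤ eLpNorm h 2 := by
  by_cases htop : eLpNorm h 2 = ∞
  · simp [htop]
  have hh₂ : MemLp h 2 := ⟨hh.aestronglyMeasurable, lt_top_iff_ne_top.2 htop⟩
  rw [eLpNorm_congr_ae (fourier_ae_eq_fourier_toLp hh hh₂), ← eLpNorm_congr_ae hh₂.coeFn_toLp,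
    ← Lp.enorm_def, ← Lp.enorm_def, ← ofReal_norm, ← ofReal_norm, Lp.norm_fourier_eq]

theorem eLpNorm_two_fourierInv_le {h : V → ℂ} (hh : Integrable h) :
    eLpNorm (𝓕⁻ h) 2 ≤ eLpNorm h 2 := by
  have hneg : 𝓕⁻ h = 𝓕 h ∘ Neg.neg := funext (Real.fourierInv_eq_fourier_neg h)
  rw [hneg, eLpNorm_comp_measurePreserving
    (continuous_fourier_of_integrable hh).aestronglyMeasurable (Measure.measurePreserving_neg _)]
  exact eLpNorm_two_fourier_le hh

end Fourier

section Translation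

theorem integrable_prod_translate_mul {E α : Type*} [MeasurableSpace E] [AddCommGroup E]
    [MeasurableAdd₂ E] [MeasurableNeg E] {μ : Measure E} [SFinite μ] [μ.IsAddRightInvariant]
    [MeasurableSpace α] {ν : Measure α} [SFinite ν] {g : E → ℝ} {h : α → ℝ} {τ : α → E}
    (hg : Integrable g μ) (hg_meas : Measurable g) (hh : Integrable h ν) (hτ : Measurable τ) :
    Integrable (fun p : E × α ↦ g (p.1 - τ p.2) * h p.2) (μ.prod ν) := by
  have hmeas : AEStronglyMeasurable (fun p : E × α ↦ g (p.1 - τ p.2) * h p.2) (μ.prod ν) :=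
    Measurable.aestronglyMeasurable (by fun_prop) |>.mul hh.1.comp_snd
  refine (integrable_prod_iff' hmeas).2 ⟨.of_forall fun a ↦ ?_, ?_⟩
  · exact (hg.comp_sub_right (τ a)).mul_const (h a)
  · simp only [norm_mul, integral_mul_const, integral_sub_right_eq_self (fun x ↦ ‖g x‖)]
    exact hh.norm.const_mul _

end Translation

/-- The real Gaussian `t ↦ exp (-b |t|²)` on a normed group; `gaussWin` is the case `b = π`. -/
noncomputable def realGaussian {V : Type*} [Norm V] (b : ℝ) (t : V) : ℝ :=
  Real.exp (-b * ‖t‖ ^ 2)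

namespace realGaussian

section Norm

variable {V : Type*} [SeminormedAddCommGroup V] {b : ℝ}

@[fun_prop]
theorem continuous (b : ℝ) : Continuous (realGaussian b : V → ℝ) := by
  unfold realGaussian; fun_prop

theorem pos (b : ℝ) (t : V) : 0 < realGaussian b t := Real.exp_pos _

theorem le_one (hb : 0 ≤ b) (t : V) : realGaussian b t ≤ 1 :=
  Real.exp_le_one_iff.2 (by nlinarith [mul_nonneg hb (sq_nonneg ‖t‖)])

theorem sub_comm (b : ℝ) (t u : V) : realGaussian b (t - u) = realGaussian b (u - t) := by
  unfold realGaussian; rw [norm_sub_rev]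

theorem mul_one_add_norm_pow_le (N : ℕ) (t : V) :
    realGaussian Real.pi t * (1 + ‖t‖) ^ N ≤ N.factorial * Real.exp 2 := by
  have hpow : (1 + ‖t‖) ^ N ≤ Real.exp (1 + ‖t‖) * N.factorial :=
    (div_le_iff₀ (by positivity)).1 (Real.pow_div_factorial_le_exp _ (by positivity) N)
  have hexp : realGaussian Real.pi t * Real.exp (1 + ‖t‖) ≤ Real.exp 2 := by
    unfold realGaussian
    rw [← Real.exp_add, Real.exp_le_exp]
    nlinarith [sq_nonneg (‖t‖ - 1), sq_nonneg ‖t‖, Real.pi_gt_three]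
  calc realGaussian Real.pi t * (1 + ‖t‖) ^ N
      ≤ realGaussian Real.pi t * (Real.exp (1 + ‖t‖) * N.factorial) := by
        gcongr
        exact (pos _ _).le
    _ = N.factorial * (realGaussian Real.pi t * Real.exp (1 + ‖t‖)) := by ring
    _ ≤ N.factorial * Real.exp 2 := by gcongr

theorem one_add_norm_pow_mul_sub_le (N : ℕ) (t x : V) :
    (1 + ‖x‖) ^ N * realGaussian Real.pi (t - x) ≤
      N.factorial * Real.exp 2 * (1 + ‖t‖) ^ N := by
  have hweight : 1 + ‖x‖ ≤ (1 + ‖t‖) * (1 + ‖t - x‖) := by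
    have : ‖x‖ ≤ ‖t‖ + ‖t - x‖ := norm_le_norm_add_norm_sub _ _
    nlinarith [mul_nonneg (norm_nonneg t) (norm_nonneg (t - x))]
  calc (1 + ‖x‖) ^ N * realGaussian Real.pi (t - x)
      ≤ ((1 + ‖t‖) * (1 + ‖t - x‖)) ^ N * realGaussian Real.pi (t - x) := by
        gcongr
        exact (pos _ _).le
    _ = realGaussian Real.pi (t - x) * (1 + ‖t - x‖) ^ N * (1 + ‖t‖) ^ N := by
        rw [mul_pow]
        ring
    _ ≤ N.factorial * Real.exp 2 * (1 + ‖t‖) ^ N :=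
        mul_le_mul_of_nonneg_right (mul_one_add_norm_pow_le N (t - x)) (by positivity)

theorem le_exp_mul (hb : 0 ≤ b) (t t' : V) :
    realGaussian b t ≤ Real.exp (b * ‖t - t'‖ ^ 2) * realGaussian (b / 2) t' := by
  have hnorm : ‖t'‖ ≤ ‖t‖ + ‖t - t'‖ := by simpa [norm_sub_rev] using norm_le_norm_add_norm_sub t t'
  unfold realGaussian
  rw [← Real.exp_add, Real.exp_le_exp]
  have : ‖t'‖ ^ 2 ≤ 2 * ‖t‖ ^ 2 + 2 * ‖t - t'‖ ^ 2 := by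
    nlinarith [sq_nonneg (‖t‖ - ‖t - t'‖), norm_nonneg t']
  nlinarith

end Norm

section InnerProduct

variable {V : Type*} [NormedAddCommGroup V] [InnerProductSpace ℝ V]

theorem mul_eq_mul_midpoint (b : ℝ) (p q : V) :
    realGaussian b p * realGaussian b q =
      realGaussian (2 * b) ((2 : ℝ)⁻¹ • (p + q)) * realGaussian (b / 2) (p - q) := by
  unfold realGaussian
  rw [← Real.exp_add, ← Real.exp_add, norm_smul, mul_pow]
  have hpar := parallelogram_law_with_norm ℝ p q
  norm_num
  linear_combination (b / 2) * hpar

variable [FiniteDimensional ℝ V] [MeasurableSpace V] [BorelSpace V] {b : ℝ}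

theorem integrable (hb : 0 < b) : Integrable (realGaussian b : V → ℝ) := by
  have h := GaussianFourier.integrable_cexp_neg_mul_sq_norm_add (V := V) (b := b)
    (by simpa using hb) 0 0
  refine h.norm.congr (.of_forall fun v ↦ ?_)
  simp [realGaussian, Complex.norm_exp, ← Complex.ofReal_pow]

theorem integral_pos (hb : 0 < b) : 0 < ∫ v : V, realGaussian b v := by
  unfold realGaussian
  rw [GaussianFourier.integral_rexp_neg_mul_sq_norm hb]
  positivity

theorem integral_mul_fourierChar (hb : 0 < b) (c x : V) :
    ∫ v : V, (realGaussian b (v - c) : ℂ) * (𝐞 ⟪v, x⟫ : ℂ) =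
      𝐞 ⟪c, x⟫ * ((Real.pi / b) ^ (Module.finrank ℝ V / 2 : ℝ) : ℝ) *
        realGaussian (Real.pi ^ 2 / b) x := by
  have hcentred : ∫ v : V, (realGaussian b v : ℂ) * (𝐞 ⟪v, x⟫ : ℂ) =
      ((Real.pi / b) ^ (Module.finrank ℝ V / 2 : ℝ) : ℝ) * realGaussian (Real.pi ^ 2 / b) x := by
    have h := GaussianFourier.integral_cexp_neg_mul_sq_norm_add (V := V) (b := b)
      (by simpa using hb) (2 * Real.pi * Complex.I) x
    convert h using 1
    · congr with v
      simp only [realGaussian, Real.fourierChar_apply, Complex.ofReal_exp, ← Complex.exp_add,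
        real_inner_comm]
      push_cast
      congr 1
      ring
    · rw [Complex.ofReal_cpow (by positivity)]
      simp only [realGaussian, Complex.ofReal_exp]
      push_cast
      congr 2
      rw [mul_pow, Complex.I_sq]
      ring
  rw [← integral_add_right_eq_self _ c]
  simp only [add_sub_cancel_right, inner_add_left, AddChar.map_add_eq_mul, Circle.coe_mul]
  simp_rw [← mul_assoc]
  rw [integral_mul_const, hcentred]
  ring

end InnerProduct

end realGaussian

section STFT

variable {ι : Type*} [Fintype ι]

theorem gaussWin_eq_realGaussian (t : EuclideanSpace ℝ ι) :
    gaussWin t = (realGaussian Real.pi t : ℂ) := by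
  simp [gaussWin, realGaussian]

theorem STFT_eq_fourier (F : EuclideanSpace ℝ ι → ℂ) (x ω : EuclideanSpace ℝ ι) :
    STFT F x ω = 𝓕 (fun t ↦ F t * (realGaussian Real.pi (t - x) : ℂ)) ω := by
  rw [Real.fourier_eq']
  unfold STFT
  congr with t
  rw [gaussWin_eq_realGaussian, Complex.conj_ofReal, smul_eq_mul, mul_comm, real_inner_comm]
  congr 2
  push_cast
  ring

theorem STFT_eq_integral (F : EuclideanSpace ℝ ι → ℂ) (x ω : EuclideanSpace ℝ ι) :
    STFT F x ω = ∫ t, F t * (realGaussian Real.pi (t - x) : ℂ) * (𝐞 (-⟪t, ω⟫) : ℂ) := by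
  rw [STFT_eq_fourier, Real.fourier_eq]
  simp only [Circle.smul_def, smul_eq_mul, mul_comm]

theorem norm_mul_realGaussian (F : EuclideanSpace ℝ ι → ℂ) (x t : EuclideanSpace ℝ ι) :
    ‖F t * (realGaussian Real.pi (t - x) : ℂ)‖ = ‖F t‖ * realGaussian Real.pi (t - x) := by
  rw [norm_mul, Complex.norm_real, Real.norm_of_nonneg (realGaussian.pos _ _).le]

theorem norm_STFT_le_integral (F : EuclideanSpace ℝ ι → ℂ) (x ω : EuclideanSpace ℝ ι) :
    ‖STFT F x ω‖ ≤ ∫ t, ‖F t‖ * realGaussian Real.pi (t - x) := by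
  rw [STFT_eq_fourier]
  simp only [← norm_mul_realGaussian]
  exact VectorFourier.norm_fourierIntegral_le_integral_norm _ _ _ _ _

section Integrable

variable {F : EuclideanSpace ℝ ι → ℂ}

theorem integrable_mul_realGaussian (hF : Integrable F) (x : EuclideanSpace ℝ ι) :
    Integrable fun t ↦ F t * (realGaussian Real.pi (t - x) : ℂ) := by
  refine hF.mono (hF.1.mul (by fun_prop)) (.of_forall fun t ↦ ?_)
  rw [norm_mul_realGaussian]
  exact mul_le_of_le_one_right (norm_nonneg _) (realGaussian.le_one Real.pi_pos.le _)

theorem norm_STFT_le_integral_norm (hF : Integrable F) (x ω : EuclideanSpace ℝ ι) :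
    ‖STFT F x ω‖ ≤ ∫ t, ‖F t‖ := by
  refine (norm_STFT_le_integral F x ω).trans (integral_mono ?_ hF.norm fun t ↦ ?_)
  · simpa only [norm_mul_realGaussian] using (integrable_mul_realGaussian hF x).norm
  · exact mul_le_of_le_one_right (norm_nonneg _) (realGaussian.le_one Real.pi_pos.le _)

theorem continuous_uncurry_STFT (hF : Integrable F) : Continuous (Function.uncurry (STFT F)) := by
  have hSTFT : Function.uncurry (STFT F) = fun p : EuclideanSpace ℝ ι × EuclideanSpace ℝ ι ↦
      ∫ t, F t * (realGaussian Real.pi (t - p.1) : ℂ) * (𝐞 (-⟪t, p.2⟫) : ℂ) :=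
    funext fun p ↦ STFT_eq_integral F p.1 p.2
  rw [hSTFT]
  refine continuous_of_dominated (fun p ↦ ?_) (fun p ↦ .of_forall fun t ↦ ?_) hF.norm
    (.of_forall fun t ↦ by fun_prop)
  · exact (hF.1.mul (by fun_prop)).mul (by fun_prop)
  · rw [norm_mul, Circle.norm_coe, mul_one, norm_mul_realGaussian]
    exact mul_le_of_le_one_right (norm_nonneg _) (realGaussian.le_one Real.pi_pos.le _)

theorem continuous_STFT_left (hF : Integrable F) (ω : EuclideanSpace ℝ ι) :
    Continuous fun x ↦ STFT F x ω :=
  (continuous_uncurry_STFT hF).comp (f := fun x ↦ (x, ω)) (by fun_prop)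

theorem continuous_STFT_right (hF : Integrable F) (x : EuclideanSpace ℝ ι) :
    Continuous (STFT F x) :=
  (continuous_uncurry_STFT hF).comp (f := fun ω ↦ (x, ω)) (by fun_prop)

theorem fourier_realGaussian_mul_fourierChar (x ω s : EuclideanSpace ℝ ι) :
    𝓕 (fun t : EuclideanSpace ℝ ι ↦ (realGaussian Real.pi (t - ω) : ℂ) * (𝐞 ⟪t, x⟫ : ℂ)) s =
      𝐞 ⟪x, ω⟫ * ((realGaussian Real.pi (s - x) : ℂ) * (𝐞 (-⟪s, ω⟫) : ℂ)) := by
  have hGauss := realGaussian.integral_mul_fourierChar Real.pi_pos ω (x - s)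
  rw [div_self Real.pi_ne_zero, Real.one_rpow, sq,
    mul_div_cancel_right₀ _ Real.pi_ne_zero] at hGauss
  calc 𝓕 (fun t : EuclideanSpace ℝ ι ↦ (realGaussian Real.pi (t - ω) : ℂ) * (𝐞 ⟪t, x⟫ : ℂ)) s
      = ∫ t : EuclideanSpace ℝ ι, (realGaussian Real.pi (t - ω) : ℂ) * (𝐞 ⟪t, x - s⟫ : ℂ) := by
        rw [Real.fourier_eq]
        congr with t
        rw [inner_sub_right, sub_eq_add_neg ⟪t, x⟫, AddChar.map_add_eq_mul, Circle.coe_mul,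
          Circle.smul_def, smul_eq_mul]
        ring
    _ = 𝐞 ⟪x, ω⟫ * ((realGaussian Real.pi (s - x) : ℂ) * (𝐞 (-⟪s, ω⟫) : ℂ)) := by
        rw [hGauss, realGaussian.sub_comm, inner_sub_right, sub_eq_add_neg ⟪ω, x⟫,
          AddChar.map_add_eq_mul, Circle.coe_mul, real_inner_comm x, real_inner_comm s]
        push_cast
        ring

theorem STFT_fourier (hF : Integrable F) (x ω : EuclideanSpace ℝ ι) :
    STFT (𝓕 F) ω (-x) = 𝐞 ⟪x, ω⟫ * STFT F x ω := by
  have hwindow : Integrable fun t : EuclideanSpace ℝ ι ↦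
      (realGaussian Real.pi (t - ω) : ℂ) * (𝐞 ⟪t, x⟫ : ℂ) := by
    refine ((realGaussian.integrable Real.pi_pos).comp_sub_right ω).mono
      (Continuous.aestronglyMeasurable (by fun_prop)) (.of_forall fun t ↦ ?_)
    rw [norm_mul, Circle.norm_coe, mul_one, Complex.norm_real]
  have hdual : ∫ t, 𝓕 F t * ((realGaussian Real.pi (t - ω) : ℂ) * (𝐞 ⟪t, x⟫ : ℂ)) =
      ∫ s, F s * 𝓕 (fun t ↦ (realGaussian Real.pi (t - ω) : ℂ) * (𝐞 ⟪t, x⟫ : ℂ)) s := by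
    have := VectorFourier.integral_fourierIntegral_smul_eq_flip
      (L := innerₗ (EuclideanSpace ℝ ι)) (μ := volume) (ν := volume)
      Real.continuous_fourierChar continuous_inner hF hwindow
    rwa [flip_innerₗ] at this
  rw [STFT_eq_integral, STFT_eq_integral]
  simp only [inner_neg_right, neg_neg, mul_assoc, hdual,
    fourier_realGaussian_mul_fourierChar]
  rw [← integral_const_mul]
  congr with s
  ring

end Integrable

end STFT

section Schwartz

theorem integrable_one_add_norm_pow_mul_norm {V : Type*} [NormedAddCommGroup V] [NormedSpace ℝ V]
    [MeasurableSpace V] [BorelSpace V] [SecondCountableTopology V] {μ : Measure V}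
    [μ.HasTemperateGrowth] (h : 𝓢(V, ℂ)) (N : ℕ) :
    Integrable (fun t ↦ (1 + ‖t‖) ^ N * ‖h t‖) μ := by
  have hbound : Integrable (fun t ↦ 2 ^ (N - 1) * (‖h t‖ + ‖t‖ ^ N * ‖h t‖)) μ :=
    ((h.integrable.norm).add (h.integrable_pow_mul μ N)).const_mul _
  refine hbound.mono' (by fun_prop) (.of_forall fun t ↦ ?_)
  rw [Real.norm_of_nonneg (by positivity)]
  calc (1 + ‖t‖) ^ N * ‖h t‖
      ≤ 2 ^ (N - 1) * (1 ^ N + ‖t‖ ^ N) * ‖h t‖ := by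
        gcongr
        exact add_pow_le zero_le_one (norm_nonneg t) N
    _ = 2 ^ (N - 1) * (‖h t‖ + ‖t‖ ^ N * ‖h t‖) := by ring

variable {ι : Type*} [Fintype ι]

theorem one_add_norm_pow_mul_norm_STFT_le {F : EuclideanSpace ℝ ι → ℂ} {N : ℕ}
    (hF : Integrable fun t ↦ (1 + ‖t‖) ^ N * ‖F t‖) (x ω : EuclideanSpace ℝ ι) :
    (1 + ‖x‖) ^ N * ‖STFT F x ω‖ ≤
      N.factorial * Real.exp 2 * ∫ t, (1 + ‖t‖) ^ N * ‖F t‖ := by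
  calc (1 + ‖x‖) ^ N * ‖STFT F x ω‖
      ≤ (1 + ‖x‖) ^ N * ∫ t, ‖F t‖ * realGaussian Real.pi (t - x) := by
        gcongr
        exact norm_STFT_le_integral F x ω
    _ = ∫ t, (1 + ‖x‖) ^ N * (‖F t‖ * realGaussian Real.pi (t - x)) :=
        (integral_const_mul _ _).symm
    _ ≤ ∫ t, N.factorial * Real.exp 2 * ((1 + ‖t‖) ^ N * ‖F t‖) := by
        refine integral_mono_of_nonneg (.of_forall fun t ↦ ?_) (hF.const_mul _)
          (.of_forall fun t ↦ ?_)
        · have := realGaussian.pos Real.pi (t - x)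
          positivity
        · linear_combination ‖F t‖ * realGaussian.one_add_norm_pow_mul_sub_le N t x
    _ = N.factorial * Real.exp 2 * ∫ t, (1 + ‖t‖) ^ N * ‖F t‖ := integral_const_mul _ _

variable (h : 𝓢(EuclideanSpace ℝ ι, ℂ))

theorem exists_one_add_norm_pow_mul_norm_STFT_le (N : ℕ) :
    ∃ C, ∀ x ω, (1 + ‖x‖) ^ N * (1 + ‖ω‖) ^ N * ‖STFT h x ω‖ ≤ C := by
  obtain ⟨A, hA⟩ : ∃ A, ∀ x ω : EuclideanSpace ℝ ι, (1 + ‖x‖) ^ (2 * N) * ‖STFT h x ω‖ ≤ A :=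
    ⟨_, one_add_norm_pow_mul_norm_STFT_le (integrable_one_add_norm_pow_mul_norm h (2 * N))⟩
  obtain ⟨B, hB⟩ : ∃ B, ∀ x ω : EuclideanSpace ℝ ι,
      (1 + ‖x‖) ^ (2 * N) * ‖STFT (𝓕 h : 𝓢(_, ℂ)) x ω‖ ≤ B :=
    ⟨_, one_add_norm_pow_mul_norm_STFT_le (integrable_one_add_norm_pow_mul_norm (𝓕 h) (2 * N))⟩
  refine ⟨A + B, fun x ω ↦ ?_⟩
  have hω := hB ω (-x)
  rw [SchwartzMap.fourier_coe, STFT_fourier h.integrable, norm_mul, Circle.norm_coe, one_mul] at hω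
  calc (1 + ‖x‖) ^ N * (1 + ‖ω‖) ^ N * ‖STFT h x ω‖
      ≤ (1 + ‖x‖) ^ (2 * N) * ‖STFT h x ω‖ + (1 + ‖ω‖) ^ (2 * N) * ‖STFT h x ω‖ := by
        have hamgm : (1 + ‖x‖) ^ N * (1 + ‖ω‖) ^ N ≤ ((1 + ‖x‖) ^ N) ^ 2 + ((1 + ‖ω‖) ^ N) ^ 2 := by
          nlinarith [two_mul_le_add_sq ((1 + ‖x‖) ^ N) ((1 + ‖ω‖) ^ N)]
        rw [pow_mul', pow_mul', ← add_mul]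
        gcongr
    _ ≤ A + B := add_le_add (hA x ω) hω

theorem exists_norm_STFT_le :
    ∃ C, ∀ x ω, ‖STFT h x ω‖ ≤
      C * ((1 + ‖x‖) ^ (-(Module.finrank ℝ (EuclideanSpace ℝ ι) + 1 : ℝ)) *
        (1 + ‖ω‖) ^ (-(Module.finrank ℝ (EuclideanSpace ℝ ι) + 1 : ℝ))) := by
  obtain ⟨C, hC⟩ :=
    exists_one_add_norm_pow_mul_norm_STFT_le h (Module.finrank ℝ (EuclideanSpace ℝ ι) + 1)
  refine ⟨C, fun x ω ↦ ?_⟩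
  rw [Real.rpow_neg (by positivity), Real.rpow_neg (by positivity), ← mul_inv, ← div_eq_mul_inv,
    le_div_iff₀ (by positivity), mul_comm]
  exact_mod_cast hC x ω

theorem integrable_uncurry_STFT : Integrable (Function.uncurry (STFT h)) := by
  obtain ⟨C, hC⟩ := exists_norm_STFT_le h
  have hdecay : Integrable fun x : EuclideanSpace ℝ ι ↦
      (1 + ‖x‖) ^ (-(Module.finrank ℝ (EuclideanSpace ℝ ι) + 1 : ℝ)) :=
    integrable_one_add_norm (lt_add_one _)
  exact ((hdecay.mul_prod hdecay).const_mul C).mono'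
    (continuous_uncurry_STFT h.integrable).aestronglyMeasurable (.of_forall fun p ↦ hC p.1 p.2)

theorem integrable_STFT (x : EuclideanSpace ℝ ι) : Integrable (STFT h x) := by
  obtain ⟨C, hC⟩ := exists_norm_STFT_le h
  have hdecay : Integrable fun ω : EuclideanSpace ℝ ι ↦
      (1 + ‖ω‖) ^ (-(Module.finrank ℝ (EuclideanSpace ℝ ι) + 1 : ℝ)) :=
    integrable_one_add_norm (lt_add_one _)
  exact ((hdecay.const_mul _).const_mul C).mono'
    (continuous_STFT_right h.integrable x).aestronglyMeasurable (.of_forall (hC x))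

theorem integral_STFT_mul_fourierChar (x z : EuclideanSpace ℝ ι) :
    ∫ ω, STFT h x ω * (𝐞 ⟪ω, z⟫ : ℂ) = h z * (realGaussian Real.pi (z - x) : ℂ) := by
  have hSTFT : 𝓕 (fun t ↦ h t * (realGaussian Real.pi (t - x) : ℂ)) = STFT h x :=
    funext fun ω ↦ (STFT_eq_fourier h x ω).symm
  have hinv := congrFun (Continuous.fourierInv_fourier_eq (by fun_prop)
    (integrable_mul_realGaussian h.integrable x) (by rw [hSTFT]; exact integrable_STFT h x)) z
  rw [hSTFT, Real.fourierInv_eq] at hinv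
  simpa only [Circle.smul_def, smul_eq_mul, mul_comm] using hinv

/-- The time-frequency shift `z ↦ e^{2πi ζ·z} e^{-2π|z-w|²}` of a Gaussian. Symbols are decomposed
into these atoms; the width is chosen so that their Weyl operators have rank one. -/
noncomputable def gaussAtom (w ζ z : EuclideanSpace ℝ ι) : ℂ :=
  𝐞 ⟪ζ, z⟫ * realGaussian (2 * Real.pi) (z - w)

theorem integrable_STFT_mul_gaussAtom (z : EuclideanSpace ℝ ι) :
    Integrable fun p : EuclideanSpace ℝ ι × EuclideanSpace ℝ ι ↦
      STFT h p.1 p.2 * gaussAtom p.1 p.2 z := by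
  unfold gaussAtom
  refine (integrable_uncurry_STFT h).mono ?_ (.of_forall fun p ↦ ?_)
  · have := continuous_uncurry_STFT h.integrable
    exact Continuous.aestronglyMeasurable (this.mul (by fun_prop))
  · rw [norm_mul, norm_mul, Circle.norm_coe, one_mul, Complex.norm_real,
      Real.norm_of_nonneg (realGaussian.pos _ _).le]
    exact mul_le_of_le_one_right (norm_nonneg _) (realGaussian.le_one (by positivity) _)

theorem integral_STFT_mul_gaussAtom (z : EuclideanSpace ℝ ι) :
    ∫ p : EuclideanSpace ℝ ι × EuclideanSpace ℝ ι, STFT h p.1 p.2 * gaussAtom p.1 p.2 z =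
      (∫ v : EuclideanSpace ℝ ι, realGaussian (3 * Real.pi) v : ℝ) * h z := by
  rw [Measure.volume_eq_prod, integral_prod _ (integrable_STFT_mul_gaussAtom h z)]
  calc ∫ w, ∫ ζ, STFT h w ζ * gaussAtom w ζ z
      = ∫ w, (realGaussian (3 * Real.pi) (z - w) : ℂ) * h z := by
        congr with w
        simp only [gaussAtom, ← mul_assoc, integral_mul_const, integral_STFT_mul_fourierChar]
        rw [mul_assoc, mul_comm, ← Complex.ofReal_mul]
        congr 2
        unfold realGaussian
        rw [← Real.exp_add]
        ring_nf
    _ = (∫ v : EuclideanSpace ℝ ι, realGaussian (3 * Real.pi) v : ℝ) * h z := by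
        rw [integral_mul_const, integral_complex_ofReal,
          integral_sub_left_eq_self (fun v ↦ realGaussian (3 * Real.pi) v) volume z]

end Schwartz

section PhaseSpace

variable {d : ℕ}

local notation "E₁" => EuclideanSpace ℝ (Fin d)
local notation "E₂" => EuclideanSpace ℝ (Fin d ⊕ Fin d)

@[fun_prop]
theorem continuous_pairE {X : Type*} [TopologicalSpace X] {f g : X → E₁} (hf : Continuous f)
    (hg : Continuous g) : Continuous fun a ↦ pairE (f a) (g a) := by
  refine (PiLp.continuous_toLp 2 _).comp (continuous_pi ?_)
  rintro (i | i) <;> simp only [Sum.elim_inl, Sum.elim_inr] <;> fun_prop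

@[fun_prop]
theorem continuous_xpart : Continuous (xpart : E₂ → E₁) := by
  unfold xpart; fun_prop

@[fun_prop]
theorem continuous_wpart : Continuous (wpart : E₂ → E₁) := by
  unfold wpart; fun_prop

theorem inner_pairE (ζ : E₂) (x ω : E₁) :
    ⟪ζ, pairE x ω⟫ = ⟪xpart ζ, x⟫ + ⟪wpart ζ, ω⟫ := by
  simp only [PiLp.inner_apply, Fintype.sum_sum_type]
  rfl

theorem norm_pairE_sub_sq (x ω : E₁) (w : E₂) :
    ‖pairE x ω - w‖ ^ 2 = ‖x - xpart w‖ ^ 2 + ‖ω - wpart w‖ ^ 2 := by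
  simp only [EuclideanSpace.norm_sq_eq, Fintype.sum_sum_type]
  rfl

theorem realGaussian_pairE_sub (b : ℝ) (x ω : E₁) (w : E₂) :
    realGaussian b (pairE x ω - w) =
      realGaussian b (x - xpart w) * realGaussian b (ω - wpart w) := by
  unfold realGaussian
  rw [norm_pairE_sub_sq, ← Real.exp_add]
  ring_nf

theorem xpart_pairE (x ω : E₁) : xpart (pairE x ω) = x := rfl

theorem wpart_pairE (x ω : E₁) : wpart (pairE x ω) = ω := rfl

theorem measurableEmbedding_pairE : MeasurableEmbedding fun p : E₁ × E₁ ↦ pairE p.1 p.2 := by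
  refine Continuous.measurableEmbedding (by fun_prop) fun p q hpq ↦ ?_
  exact Prod.ext (congrArg xpart hpq) (congrArg wpart hpq)

theorem measurePreserving_pairE : MeasurePreserving fun p : E₁ × E₁ ↦ pairE p.1 p.2 :=
  have hofLp := (PiLp.volume_preserving_ofLp (Fin d)).prod (PiLp.volume_preserving_ofLp (Fin d))
  (PiLp.volume_preserving_toLp (Fin d ⊕ Fin d)).comp
    ((volume_measurePreserving_sumPiEquivProdPi_symm fun _ ↦ ℝ).comp hofLp)

theorem enorm_integral_le_lintegral_enorm_integral {k : E₂ × E₂ → ℂ} (hk : Integrable k) :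
    ‖∫ p, k p‖ₑ ≤ ∫⁻ ζ, ∫⁻ u : E₁, ‖∫ v : E₁, k (pairE u v, ζ)‖ₑ := by
  rw [Measure.volume_eq_prod, integral_prod_symm _ hk]
  refine (enorm_integral_le_lintegral_enorm _).trans (lintegral_mono_ae ?_)
  filter_upwards [hk.prod_left_ae] with ζ hζ
  have hζ' : Integrable fun p : E₁ × E₁ ↦ k (pairE p.1 p.2, ζ) :=
    measurePreserving_pairE.integrable_comp_of_integrable hζ
  rw [← measurePreserving_pairE.integral_comp measurableEmbedding_pairE,
    Measure.volume_eq_prod, integral_prod _ hζ']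
  exact enorm_integral_le_lintegral_enorm _

theorem weylOp_eq_integral (a : E₂ → ℂ) (f : E₁ → ℂ) (x : E₁) :
    weylOp a f x = ∫ y, ∫ ω, 𝐞 ⟪x - y, ω⟫ * a (pairE ((2 : ℝ)⁻¹ • (x + y)) ω) * f y := by
  unfold weylOp
  congr! 6
  rw [Real.fourierChar_apply]
  push_cast
  ring_nf

theorem fourierChar_mul_gaussAtom_pairE (x y u v ω : E₁) (ζ : E₂) :
    𝐞 ⟪x - y, ω⟫ * gaussAtom (pairE u v) ζ (pairE ((2 : ℝ)⁻¹ • (x + y)) ω) =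
      𝐞 ⟪xpart ζ, (2 : ℝ)⁻¹ • (x + y)⟫ * realGaussian (2 * Real.pi) ((2 : ℝ)⁻¹ • (x + y) - u) *
        (realGaussian (2 * Real.pi) (ω - v) * 𝐞 ⟪ω, x - y + wpart ζ⟫) := by
  unfold gaussAtom
  rw [inner_pairE, realGaussian_pairE_sub, xpart_pairE, wpart_pairE, inner_add_right,
    real_inner_comm ω, real_inner_comm ω, AddChar.map_add_eq_mul, AddChar.map_add_eq_mul]
  push_cast
  ring

theorem integral_fourierChar_mul_gaussAtom_pairE (x y u v : E₁) (ζ : E₂) :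
    ∫ ω, 𝐞 ⟪x - y, ω⟫ * gaussAtom (pairE u v) ζ (pairE ((2 : ℝ)⁻¹ • (x + y)) ω) =
      𝐞 ⟪xpart ζ, (2 : ℝ)⁻¹ • (x + y)⟫ * 𝐞 ⟪v, x - y + wpart ζ⟫ *
        ((1 / 2) ^ (d / 2 : ℝ) : ℝ) *
          (realGaussian Real.pi (x + (2 : ℝ)⁻¹ • wpart ζ - u) *
            realGaussian Real.pi (y - (u + (2 : ℝ)⁻¹ • wpart ζ))) := by
  have hmid := realGaussian.mul_eq_mul_midpoint Real.pi (x + (2 : ℝ)⁻¹ • wpart ζ - u)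
    (y - (u + (2 : ℝ)⁻¹ • wpart ζ))
  rw [show (2 : ℝ)⁻¹ • (x + (2 : ℝ)⁻¹ • wpart ζ - u + (y - (u + (2 : ℝ)⁻¹ • wpart ζ))) =
      (2 : ℝ)⁻¹ • (x + y) - u by module,
    show x + (2 : ℝ)⁻¹ • wpart ζ - u - (y - (u + (2 : ℝ)⁻¹ • wpart ζ)) = x - y + wpart ζ by
      module] at hmid
  have hGauss := realGaussian.integral_mul_fourierChar Real.two_pi_pos v (x - y + wpart ζ)
  rw [finrank_euclideanSpace_fin, show Real.pi / (2 * Real.pi) = 1 / 2 by field_simp,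
    show Real.pi ^ 2 / (2 * Real.pi) = Real.pi / 2 by field_simp] at hGauss
  simp_rw [fourierChar_mul_gaussAtom_pairE]
  rw [integral_const_mul, hGauss, ← Complex.ofReal_mul (realGaussian Real.pi _), hmid]
  push_cast
  ring

theorem weylOp_gaussAtom (f : E₁ → ℂ) (x u v : E₁) (ζ : E₂) :
    weylOp (gaussAtom (pairE u v) ζ) f x =
      ((1 / 2) ^ (d / 2 : ℝ) : ℝ) * realGaussian Real.pi (x + (2 : ℝ)⁻¹ • wpart ζ - u) *
        𝐞 (2⁻¹ * ⟪xpart ζ, x⟫) * 𝐞 ⟪v, x + wpart ζ⟫ *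
          STFT f (u + (2 : ℝ)⁻¹ • wpart ζ) (v - (2 : ℝ)⁻¹ • xpart ζ) := by
  have hphase (y : E₁) : (𝐞 ⟪xpart ζ, (2 : ℝ)⁻¹ • (x + y)⟫ * 𝐞 ⟪v, x - y + wpart ζ⟫ : ℂ) =
      𝐞 (2⁻¹ * ⟪xpart ζ, x⟫) * 𝐞 ⟪v, x + wpart ζ⟫ *
        𝐞 (-⟪y, v - (2 : ℝ)⁻¹ • xpart ζ⟫) := by
    simp only [← Circle.coe_mul, ← AddChar.map_add_eq_mul]
    simp only [inner_add_right, inner_sub_right, real_inner_smul_right, real_inner_comm y]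
    ring_nf
  rw [weylOp_eq_integral, STFT_eq_integral, ← integral_const_mul]
  congr with y
  rw [integral_mul_const, integral_fourierChar_mul_gaussAtom_pairE, hphase]
  ring

end PhaseSpace

theorem integral_integral_integral_rotate {α β γ G : Type*} [MeasurableSpace α]
    [MeasurableSpace β] [MeasurableSpace γ] [NormedAddCommGroup G] [NormedSpace ℝ G]
    {μ : Measure α} {ν : Measure β} {ρ : Measure γ} [SFinite μ] [SFinite ν] [SFinite ρ]
    {F : α → β → γ → G} (hF : Integrable (fun p : (α × β) × γ ↦ F p.1.1 p.1.2 p.2)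
      ((μ.prod ν).prod ρ)) :
    ∫ x, ∫ y, ∫ z, F x y z ∂ρ ∂ν ∂μ = ∫ z, ∫ x, ∫ y, F x y z ∂ν ∂μ ∂ρ := by
  rw [← integral_prod (fun p : α × β ↦ ∫ z, F p.1 p.2 z ∂ρ) hF.integral_prod_left,
    integral_integral_swap hF]
  exact integral_congr_ae (hF.prod_left_ae.mono fun z hz ↦ integral_prod _ hz)

section WeylSynthesis

variable {d : ℕ}

local notation "E₁" => EuclideanSpace ℝ (Fin d)
local notation "E₂" => EuclideanSpace ℝ (Fin d ⊕ Fin d)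

theorem norm_gaussAtom_pairE_le (w ζ : E₂) (x ω : E₁) :
    ‖gaussAtom w ζ (pairE x ω)‖ ≤ realGaussian (2 * Real.pi) (ω - wpart w) := by
  unfold gaussAtom
  rw [norm_mul, Circle.norm_coe, one_mul, Complex.norm_real,
    Real.norm_of_nonneg (realGaussian.pos _ _).le, realGaussian_pairE_sub]
  exact mul_le_of_le_one_left (realGaussian.pos _ _).le
    (realGaussian.le_one Real.two_pi_pos.le _)

variable (σ : 𝓢(EuclideanSpace ℝ (Fin d ⊕ Fin d), ℂ)) (f : 𝓢(EuclideanSpace ℝ (Fin d), ℂ))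
  (x : EuclideanSpace ℝ (Fin d))

theorem integrable_weylOp_STFT_mul_gaussAtom :
    Integrable fun p : (E₁ × E₁) × (E₂ × E₂) ↦
      𝐞 ⟪x - p.1.1, p.1.2⟫ * (STFT σ p.2.1 p.2.2 *
        gaussAtom p.2.1 p.2.2 (pairE ((2 : ℝ)⁻¹ • (x + p.1.1)) p.1.2)) * f p.1.1 := by
  have hprod : Integrable (fun q : E₁ × E₁ ↦ ‖f q.1‖ * realGaussian (2 * Real.pi) q.2)
      (volume.prod volume) :=
    f.integrable.norm.mul_prod (realGaussian.integrable Real.two_pi_pos)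
  have hprod_cont : Continuous fun q : E₁ × E₁ ↦ ‖f q.1‖ * realGaussian (2 * Real.pi) q.2 := by
    fun_prop
  have hτ : Continuous fun p : E₂ × E₂ ↦ ((0 : E₁), wpart p.1) := by fun_prop
  have hdom : Integrable (fun p : (E₁ × E₁) × (E₂ × E₂) ↦
      ‖f p.1.1‖ * realGaussian (2 * Real.pi) (p.1.2 - wpart p.2.1) * ‖STFT σ p.2.1 p.2.2‖)
      ((volume.prod volume).prod volume) := by
    simpa only [Prod.fst_sub, Prod.snd_sub, sub_zero, Function.uncurry_def] using
      integrable_prod_translate_mul hprod hprod_cont.measurable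
        (integrable_uncurry_STFT σ).norm hτ.measurable
  refine hdom.mono' (Continuous.aestronglyMeasurable ?_) (.of_forall fun p ↦ ?_)
  · have hSTFT : Continuous fun p : (E₁ × E₁) × (E₂ × E₂) ↦ STFT σ p.2.1 p.2.2 :=
      (continuous_uncurry_STFT σ.integrable).comp continuous_snd
    unfold gaussAtom
    fun_prop
  · calc ‖𝐞 ⟪x - p.1.1, p.1.2⟫ * (STFT σ p.2.1 p.2.2 *
          gaussAtom p.2.1 p.2.2 (pairE ((2 : ℝ)⁻¹ • (x + p.1.1)) p.1.2)) * f p.1.1‖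
        = ‖STFT σ p.2.1 p.2.2‖ *
            ‖gaussAtom p.2.1 p.2.2 (pairE ((2 : ℝ)⁻¹ • (x + p.1.1)) p.1.2)‖ * ‖f p.1.1‖ := by
          rw [norm_mul, norm_mul, Circle.norm_coe, one_mul, norm_mul]
      _ ≤ ‖STFT σ p.2.1 p.2.2‖ * realGaussian (2 * Real.pi) (p.1.2 - wpart p.2.1) *
            ‖f p.1.1‖ := by
          gcongr
          exact norm_gaussAtom_pairE_le _ _ _ _
      _ = ‖f p.1.1‖ * realGaussian (2 * Real.pi) (p.1.2 - wpart p.2.1) *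
            ‖STFT σ p.2.1 p.2.2‖ := by ring

theorem STFT_mul_weylOp_gaussAtom (p : E₂ × E₂) :
    STFT σ p.1 p.2 * weylOp (gaussAtom p.1 p.2) f x =
      ∫ y, ∫ ω, 𝐞 ⟪x - y, ω⟫ * (STFT σ p.1 p.2 *
        gaussAtom p.1 p.2 (pairE ((2 : ℝ)⁻¹ • (x + y)) ω)) * f y := by
  rw [weylOp_eq_integral, ← integral_const_mul]
  congr with y
  rw [← integral_const_mul]
  congr with ω
  ring

theorem integrable_STFT_mul_weylOp_gaussAtom :
    Integrable fun p : E₂ × E₂ ↦ STFT σ p.1 p.2 * weylOp (gaussAtom p.1 p.2) f x := by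
  have hint := integrable_weylOp_STFT_mul_gaussAtom σ f x
  refine hint.integral_prod_right.congr (hint.prod_left_ae.mono fun p hp ↦ ?_)
  exact (integral_prod _ hp).trans (STFT_mul_weylOp_gaussAtom σ f x p).symm

theorem integral_STFT_mul_weylOp_gaussAtom :
    ∫ p : E₂ × E₂, STFT σ p.1 p.2 * weylOp (gaussAtom p.1 p.2) f x =
      (∫ v : E₂, realGaussian (3 * Real.pi) v : ℝ) * weylOp σ f x := by
  simp_rw [STFT_mul_weylOp_gaussAtom]
  rw [← integral_integral_integral_rotate (integrable_weylOp_STFT_mul_gaussAtom σ f x),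
    weylOp_eq_integral, ← integral_const_mul]
  congr with y
  rw [← integral_const_mul]
  congr with ω
  rw [integral_mul_const, integral_const_mul, integral_STFT_mul_gaussAtom]
  ring

end WeylSynthesis

section SupSTFT

variable {ι : Type*} [Fintype ι]

/-- The supremum of `|STFT F|` over the positions, as a function of the frequency. For integrable
`F` its integral is the `M^{∞,1}` norm; the pointwise supremum replaces the essential supremum
there so that it can be used at every point. -/
noncomputable def supSTFT (F : EuclideanSpace ℝ ι → ℂ) (ζ : EuclideanSpace ℝ ι) : ℝ≥0∞ :=
  ⨆ w, ‖STFT F w ζ‖ₑ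

theorem enorm_STFT_le_supSTFT (F : EuclideanSpace ℝ ι → ℂ) (w ζ : EuclideanSpace ℝ ι) :
    ‖STFT F w ζ‖ₑ ≤ supSTFT F ζ :=
  le_iSup (fun w ↦ ‖STFT F w ζ‖ₑ) w

theorem essSup_eq_iSup_of_continuous {X : Type*} [TopologicalSpace X] [MeasurableSpace X]
    {μ : Measure X} [μ.IsOpenPosMeasure] {g : X → ℝ≥0∞} (hg : Continuous g) :
    essSup g μ = ⨆ x, g x := by
  refine le_antisymm (essSup_le_of_ae_le _ (.of_forall (le_iSup g))) (iSup_le fun x ↦ ?_)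
  have hdense : Dense {x | g x ≤ essSup g μ} := Measure.dense_of_ae (_root_.ae_le_essSup)
  have hclosed : IsClosed {x | g x ≤ essSup g μ} := isClosed_le hg continuous_const
  exact hclosed.closure_eq.subset (hdense x)

variable {F : EuclideanSpace ℝ ι → ℂ}

theorem measurable_supSTFT (hF : Integrable F) : Measurable (supSTFT F) :=
  (lowerSemicontinuous_iSup fun w ↦
    (continuous_STFT_right hF w).enorm.lowerSemicontinuous).measurable

theorem lintegral_supSTFT (hF : Integrable F) : ∫⁻ ζ, supSTFT F ζ = modNorm ∞ 1 F := by
  simp only [modNorm, lqNorm, ENNReal.one_ne_top, if_true, if_false, ENNReal.toReal_one,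
    ENNReal.rpow_one, div_one]
  congr with ζ
  exact (essSup_eq_iSup_of_continuous (continuous_STFT_left hF ζ).enorm).symm

end SupSTFT

section WeylSlice

variable {d : ℕ}

local notation "E₁" => EuclideanSpace ℝ (Fin d)
local notation "E₂" => EuclideanSpace ℝ (Fin d ⊕ Fin d)

theorem eLpNorm_two_STFT_le {F : E₁ → ℂ} (hF : Integrable F) (b : E₁) :
    eLpNorm (STFT F b) 2 ≤ eLpNorm (fun t ↦ F t * (realGaussian Real.pi (t - b) : ℂ)) 2 := by
  rw [funext (STFT_eq_fourier F b)]
  exact eLpNorm_two_fourier_le (integrable_mul_realGaussian hF b)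

/-- The contribution to `L_σ f`, in frequency `v`, of the part of the symbol `σ` located at
position `u` with phase-space frequency `ζ`: up to a phase and a Gaussian in `x`, the operators with
symbols `gaussAtom (pairE u v) ζ` sum over `v` to the inverse Fourier transform of this slice. -/
noncomputable def weylSlice (σ : E₂ → ℂ) (f : E₁ → ℂ) (ζ : E₂) (u v : E₁) : ℂ :=
  𝐞 ⟪v, wpart ζ⟫ * STFT σ (pairE u v) ζ *
    STFT f (u + (2 : ℝ)⁻¹ • wpart ζ) (v - (2 : ℝ)⁻¹ • xpart ζ)

theorem enorm_circle_mul (a : Circle) (z : ℂ) : ‖a * z‖ₑ = ‖z‖ₑ := by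
  rw [← ofReal_norm, norm_mul, Circle.norm_coe, one_mul, ofReal_norm]

theorem enorm_realGaussian (b : ℝ) (t : E₁) :
    ‖(realGaussian b t : ℂ)‖ₑ = ENNReal.ofReal (realGaussian b t) := by
  rw [← ofReal_norm, Complex.norm_real, Real.norm_of_nonneg (realGaussian.pos b t).le]

theorem integral_STFT_mul_weylOp_gaussAtom_pairE (σ : E₂ → ℂ) (f : E₁ → ℂ) (x u : E₁) (ζ : E₂) :
    ∫ v, STFT σ (pairE u v) ζ * weylOp (gaussAtom (pairE u v) ζ) f x =
      ((1 / 2) ^ (d / 2 : ℝ) : ℝ) * realGaussian Real.pi (x + (2 : ℝ)⁻¹ • wpart ζ - u) *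
        𝐞 (2⁻¹ * ⟪xpart ζ, x⟫) * 𝓕⁻ (weylSlice σ f ζ u) x := by
  rw [Real.fourierInv_eq, ← integral_const_mul]
  congr with v
  rw [weylOp_gaussAtom, weylSlice, inner_add_right, AddChar.map_add_eq_mul, Circle.smul_def,
    smul_eq_mul]
  push_cast
  ring

theorem enorm_integral_STFT_mul_weylOp_gaussAtom_pairE_le (σ : E₂ → ℂ) (f : E₁ → ℂ) (x u : E₁)
    (ζ : E₂) :
    ‖∫ v, STFT σ (pairE u v) ζ * weylOp (gaussAtom (pairE u v) ζ) f x‖ₑ ≤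
      ENNReal.ofReal (realGaussian Real.pi (x + (2 : ℝ)⁻¹ • wpart ζ - u)) *
        ‖𝓕⁻ (weylSlice σ f ζ u) x‖ₑ := by
  have hhalf : ‖(((1 / 2) ^ (d / 2 : ℝ) : ℝ) : ℂ)‖ₑ ≤ 1 := by
    rw [← ofReal_norm, ENNReal.ofReal_le_one, Complex.norm_real,
      Real.norm_of_nonneg (by positivity)]
    exact Real.rpow_le_one (by norm_num) (by norm_num) (by positivity)
  rw [integral_STFT_mul_weylOp_gaussAtom_pairE, mul_assoc, mul_assoc, enorm_mul, enorm_mul,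
    enorm_circle_mul, enorm_realGaussian]
  exact mul_le_of_le_one_left' hhalf

variable (σ : 𝓢(EuclideanSpace ℝ (Fin d ⊕ Fin d), ℂ)) (f : 𝓢(EuclideanSpace ℝ (Fin d), ℂ))

theorem enorm_weylOp_le (x : E₁) :
    ENNReal.ofReal (∫ v : E₂, realGaussian (3 * Real.pi) v) * ‖weylOp σ f x‖ₑ ≤
      ∫⁻ ζ : E₂, ∫⁻ u : E₁,
        ENNReal.ofReal (realGaussian Real.pi (x + (2 : ℝ)⁻¹ • wpart ζ - u)) *
          ‖𝓕⁻ (weylSlice σ f ζ u) x‖ₑ := by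
  have hpos : 0 < ∫ v : E₂, realGaussian (3 * Real.pi) v :=
    realGaussian.integral_pos (by positivity)
  calc ENNReal.ofReal (∫ v : E₂, realGaussian (3 * Real.pi) v) * ‖weylOp σ f x‖ₑ
      = ‖∫ p : E₂ × E₂, STFT σ p.1 p.2 * weylOp (gaussAtom p.1 p.2) f x‖ₑ := by
        rw [integral_STFT_mul_weylOp_gaussAtom, enorm_mul, ← ofReal_norm (Complex.ofReal _),
          Complex.norm_real, Real.norm_of_nonneg hpos.le]
    _ ≤ ∫⁻ ζ : E₂, ∫⁻ u : E₁,
          ‖∫ v : E₁, STFT σ (pairE u v) ζ * weylOp (gaussAtom (pairE u v) ζ) f x‖ₑ :=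
        enorm_integral_le_lintegral_enorm_integral (integrable_STFT_mul_weylOp_gaussAtom σ f x)
    _ ≤ _ := by
        gcongr with ζ u
        exact enorm_integral_STFT_mul_weylOp_gaussAtom_pairE_le σ f x u ζ

theorem continuous_weylSlice :
    Continuous fun q : (E₂ × E₁) × E₁ ↦ weylSlice σ f q.1.1 q.1.2 q.2 := by
  have hσ : Continuous fun q : (E₂ × E₁) × E₁ ↦ STFT σ (pairE q.1.2 q.2) q.1.1 :=
    (continuous_uncurry_STFT σ.integrable).comp
      (f := fun q : (E₂ × E₁) × E₁ ↦ (pairE q.1.2 q.2, q.1.1)) (by fun_prop)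
  have hf : Continuous fun q : (E₂ × E₁) × E₁ ↦
      STFT f (q.1.2 + (2 : ℝ)⁻¹ • wpart q.1.1) (q.2 - (2 : ℝ)⁻¹ • xpart q.1.1) :=
    (continuous_uncurry_STFT f.integrable).comp (f := fun q : (E₂ × E₁) × E₁ ↦
      (q.1.2 + (2 : ℝ)⁻¹ • wpart q.1.1, q.2 - (2 : ℝ)⁻¹ • xpart q.1.1)) (by fun_prop)
  unfold weylSlice
  fun_prop

theorem measurable_fourierInv_weylSlice :
    Measurable fun q : E₁ × (E₂ × E₁) ↦ 𝓕⁻ (weylSlice σ f q.2.1 q.2.2) q.1 := by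
  have hcont : Continuous fun r : (E₁ × (E₂ × E₁)) × E₁ ↦
      𝐞 ⟪r.2, r.1.1⟫ • weylSlice σ f r.1.2.1 r.1.2.2 r.2 := by
    have := (continuous_weylSlice σ f).comp
      (f := fun r : (E₁ × (E₂ × E₁)) × E₁ ↦ (r.1.2, r.2)) (by fun_prop)
    fun_prop
  simp only [Real.fourierInv_eq]
  exact hcont.stronglyMeasurable.integral_prod_right'.measurable

theorem integrable_weylSlice (ζ : E₂) (u : E₁) : Integrable (weylSlice σ f ζ u) := by
  have hf : Integrable fun v ↦
      STFT f (u + (2 : ℝ)⁻¹ • wpart ζ) (v - (2 : ℝ)⁻¹ • xpart ζ) :=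
    (integrable_STFT f _).comp_sub_right _
  have hcont : Continuous (weylSlice σ f ζ u) :=
    (continuous_weylSlice σ f).comp (f := fun v ↦ ((ζ, u), v)) (by fun_prop)
  refine (hf.norm.const_mul (∫ z, ‖σ z‖)).mono' hcont.aestronglyMeasurable
    (.of_forall fun v ↦ ?_)
  rw [weylSlice, norm_mul, norm_mul, Circle.norm_coe, one_mul]
  gcongr
  exact norm_STFT_le_integral_norm σ.integrable _ _

theorem eLpNorm_two_weylSlice_le (ζ : E₂) (u : E₁) :
    eLpNorm (weylSlice σ f ζ u) 2 ≤
      supSTFT σ ζ * eLpNorm (STFT f (u + (2 : ℝ)⁻¹ • wpart ζ)) 2 := by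
  have hcont : Continuous (STFT f (u + (2 : ℝ)⁻¹ • wpart ζ)) :=
    continuous_STFT_right f.integrable _
  have htranslate : MeasurePreserving fun v : E₁ ↦ v - (2 : ℝ)⁻¹ • xpart ζ :=
    measurePreserving_sub_right volume _
  rw [← eLpNorm_comp_measurePreserving hcont.aestronglyMeasurable htranslate]
  refine eLpNorm_le_mul_eLpNorm_of_ae_le_mul'' 2
    (hcont.comp (continuous_sub_right _)).aestronglyMeasurable (.of_forall fun v ↦ ?_)
  rw [weylSlice, mul_assoc, enorm_circle_mul, enorm_mul]
  gcongr
  · exact enorm_STFT_le_supSTFT _ _ _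
  · rfl

theorem eLpNorm_two_fourierInv_weylSlice_le (ζ : E₂) (u : E₁) :
    eLpNorm (𝓕⁻ (weylSlice σ f ζ u) : E₁ → ℂ) 2 ≤ supSTFT σ ζ *
      eLpNorm (fun t ↦ f t * (realGaussian Real.pi (t - (u + (2 : ℝ)⁻¹ • wpart ζ)) : ℂ)) 2 :=
  (eLpNorm_two_fourierInv_le (integrable_weylSlice σ f ζ u)).trans <|
    (eLpNorm_two_weylSlice_le σ f ζ u).trans <|
      mul_le_mul_right (eLpNorm_two_STFT_le f.integrable _) _

end WeylSlice

section Lattice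

variable {d : ℕ}

local notation "E₁" => EuclideanSpace ℝ (Fin d)

/-- The point of `ℤ^d ⊆ ℝ^d` with coordinates `n`, by which the cubes in `wNorm` are translated. -/
def latticePoint (n : Fin d → ℤ) : EuclideanSpace ℝ (Fin d) := WithLp.toLp 2 fun i ↦ (n i : ℝ)

theorem unitCube_eq_preimage :
    unitCube d = WithLp.ofLp ⁻¹' (Set.univ.pi fun _ ↦ Set.Ico (0 : ℝ) 1) := by
  ext x
  simp [unitCube]

theorem measurableSet_unitCube : MeasurableSet (unitCube d) := by
  rw [unitCube_eq_preimage]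
  exact (PiLp.continuous_ofLp 2 _).measurable (.univ_pi fun _ ↦ measurableSet_Ico)

theorem volume_unitCube : volume (unitCube d) = 1 := by
  rw [unitCube_eq_preimage, (PiLp.volume_preserving_ofLp (Fin d)).measure_preimage
    (MeasurableSet.univ_pi fun _ ↦ measurableSet_Ico).nullMeasurableSet, Real.volume_pi_Ico]
  simp

theorem iUnion_preimage_sub_latticePoint_unitCube :
    ⋃ n : Fin d → ℤ, (fun x : E₁ ↦ x - latticePoint n) ⁻¹' unitCube d = Set.univ := by
  refine Set.eq_univ_of_forall fun x ↦ Set.mem_iUnion.2 ⟨fun i ↦ ⌊x i⌋, fun i ↦ ?_⟩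
  exact ⟨Int.fract_nonneg (x i), Int.fract_lt_one (x i)⟩

theorem pairwise_disjoint_preimage_sub_latticePoint_unitCube :
    Pairwise (Function.onFun Disjoint
      fun n : Fin d → ℤ ↦ (fun x : E₁ ↦ x - latticePoint n) ⁻¹' unitCube d) := by
  refine fun n m hnm ↦ Set.disjoint_left.2 fun x hn hm ↦ hnm (funext fun i ↦ ?_)
  have hfloor {k : Fin d → ℤ} (hk : x - latticePoint k ∈ unitCube d) : ⌊x i⌋ = k i := by
    obtain ⟨hle, hlt⟩ : 0 ≤ x i - k i ∧ x i - k i < 1 := hk i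
    exact Int.floor_eq_iff.2 ⟨by linarith, by linarith⟩
  exact (hfloor hn).symm.trans (hfloor hm)

theorem tsum_setLIntegral_unitCube_add_latticePoint {h : E₁ → ℝ≥0∞} (hh : Measurable h) :
    ∑' n : Fin d → ℤ, ∫⁻ x in unitCube d, h (x + latticePoint n) = ∫⁻ x, h x := by
  have htranslate (n : Fin d → ℤ) : ∫⁻ x in unitCube d, h (x + latticePoint n) =
      ∫⁻ x in (fun x ↦ x - latticePoint n) ⁻¹' unitCube d, h x := by
    have hpreimage := (measurePreserving_sub_right volume
      (latticePoint n)).setLIntegral_comp_preimage measurableSet_unitCube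
        (f := fun x ↦ h (x + latticePoint n)) (by fun_prop)
    simpa only [sub_add_cancel] using hpreimage.symm
  simp_rw [htranslate]
  rw [← lintegral_iUnion (fun n ↦ measurableSet_unitCube.preimage (measurable_sub_const _))
    pairwise_disjoint_preimage_sub_latticePoint_unitCube,
    iUnion_preimage_sub_latticePoint_unitCube, Measure.restrict_univ]

theorem norm_sub_sq_le_of_mem_unitCube {x y : E₁} (hx : x ∈ unitCube d) (hy : y ∈ unitCube d) :
    ‖x - y‖ ^ 2 ≤ d := by
  have hcoord (i : Fin d) : ‖(x - y) i‖ ^ 2 ≤ 1 := by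
    obtain ⟨hx0, hx1⟩ := hx i
    obtain ⟨hy0, hy1⟩ := hy i
    rw [sq_le_one_iff₀ (norm_nonneg _), PiLp.sub_apply, Real.norm_eq_abs, abs_le]
    constructor <;> linarith
  calc ‖x - y‖ ^ 2 = ∑ i, ‖(x - y) i‖ ^ 2 := EuclideanSpace.norm_sq_eq _
    _ ≤ ∑ _i : Fin d, 1 := Finset.sum_le_sum fun i _ ↦ hcoord i
    _ = d := by simp

end Lattice

section LocalNorm

variable {d : ℕ}

local notation "E₁" => EuclideanSpace ℝ (Fin d)

/-- The `L²` norm of `g` over the unit cube at the lattice point `n`; the `W(L²,L^s)` norm is the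
`ℓ^s` norm of these. -/
noncomputable def localL2 (g : EuclideanSpace ℝ (Fin d) → ℂ) (n : Fin d → ℤ) : ℝ≥0∞ :=
  eLpNorm (fun x ↦ g (x + latticePoint n)) 2 (volume.restrict (unitCube d))

theorem wNorm_two_eq_eLpNorm_localL2 {s : ℝ≥0∞} (hs : s ≠ 0) (g : E₁ → ℂ) :
    wNorm d 2 s g = eLpNorm (localL2 g) s .count := by
  unfold wNorm
  simp only [lqNorm_eq_eLpNorm hs, lqNorm_eq_eLpNorm two_ne_zero]
  congr with n

theorem localL2_le_eLpNorm_two {g : E₁ → ℂ} (hg : AEStronglyMeasurable g) (n : Fin d → ℤ) :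
    localL2 g n ≤ eLpNorm g 2 := by
  have htranslate : MeasurePreserving fun x : E₁ ↦ x + latticePoint n :=
    measurePreserving_add_right volume (latticePoint n)
  rw [← eLpNorm_comp_measurePreserving hg htranslate]
  exact eLpNorm_mono_measure _ Measure.restrict_le_self

theorem localL2_le_mul_lintegral {β : Type*} [MeasurableSpace β] {ν : Measure β} [SFinite ν]
    {g : E₁ → ℂ} {F : E₁ → β → ℂ} (hF : Measurable fun q : E₁ × β ↦ ‖F q.1 q.2‖ₑ) {C : ℝ≥0∞}
    (hg : ∀ x, ‖g x‖ₑ ≤ C * ∫⁻ y, ‖F x y‖ₑ ∂ν) (n : Fin d → ℤ) :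
    localL2 g n ≤ C * ∫⁻ y, localL2 (F · y) n ∂ν := by
  have hFn : Measurable fun q : E₁ × β ↦ ‖F (q.1 + latticePoint n) q.2‖ₑ :=
    hF.comp ((measurable_fst.add_const _).prodMk measurable_snd)
  refine (eLpNorm_le_mul_eLpNorm_of_ae_le_mul'' 2
    hFn.lintegral_prod_right'.aestronglyMeasurable (.of_forall fun x ↦ hg _)).trans ?_
  refine mul_le_mul_right ((eLpNorm_two_lintegral_le_lintegral_eLpNorm hFn).trans_eq ?_) _
  exact lintegral_congr fun y ↦ eLpNorm_enorm _

theorem localL2_sq (g : E₁ → ℂ) (n : Fin d → ℤ) :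
    localL2 g n ^ 2 = ∫⁻ x in unitCube d, ‖g (x + latticePoint n)‖ₑ ^ 2 :=
  eLpNorm_two_sq _

theorem eLpNorm_two_sq_eq_tsum_localL2_sq {g : E₁ → ℂ} (hg : Measurable g) :
    eLpNorm g 2 ^ 2 = ∑' k, localL2 g k ^ 2 := by
  rw [eLpNorm_two_sq, ← tsum_setLIntegral_unitCube_add_latticePoint (by fun_prop)]
  exact tsum_congr fun k ↦ (localL2_sq g k).symm

theorem eLpNorm_two_le_tsum_localL2 {g : E₁ → ℂ} (hg : Measurable g) :
    eLpNorm g 2 ≤ ∑' k, localL2 g k := by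
  have hsq : ∑' k, localL2 g k ^ 2 ≤ (∑' k, localL2 g k) ^ 2 := by
    simp only [sq, ← ENNReal.tsum_mul_right]
    exact ENNReal.tsum_le_tsum fun k ↦ mul_le_mul_right (ENNReal.le_tsum k) _
  rw [← eLpNorm_two_sq_eq_tsum_localL2_sq hg] at hsq
  exact (ENNReal.pow_le_pow_left_iff two_ne_zero).1 hsq

end LocalNorm

section CubeGaussian

variable {d : ℕ}

local notation "E₁" => EuclideanSpace ℝ (Fin d)

/-- A majorant, on the unit cube at `n`, of the Gaussian centred at `w` with parameter `b`. It is
an integral over the cube, rather than the supremum, so that sums over `n` are integrals over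
`ℝ^d`; the factor `exp (b * d)` comes from `‖x - y‖² ≤ d` for points of the same cube. -/
noncomputable def cubeGaussian (b : ℝ) (n : Fin d → ℤ) (w : EuclideanSpace ℝ (Fin d)) : ℝ≥0∞ :=
  ENNReal.ofReal (Real.exp (b * d)) *
    ∫⁻ x in unitCube d, ENNReal.ofReal (realGaussian (b / 2) (x + latticePoint n - w))

/-- The common value of `∑ n, cubeGaussian b n w` and `∫ w, cubeGaussian b n w`. -/
noncomputable def cubeGaussianMass (d : ℕ) (b : ℝ) : ℝ≥0∞ :=
  ENNReal.ofReal (Real.exp (b * d)) *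
    ∫⁻ x : EuclideanSpace ℝ (Fin d), ENNReal.ofReal (realGaussian (b / 2) x)

theorem cubeGaussianMass_lt_top {b : ℝ} (hb : 0 < b) : cubeGaussianMass d b < ∞ :=
  ENNReal.mul_lt_top ENNReal.ofReal_lt_top
    (realGaussian.integrable (half_pos hb)).lintegral_lt_top

theorem measurable_cubeGaussian (b : ℝ) (n : Fin d → ℤ) : Measurable (cubeGaussian b n) := by
  have hmeas : Measurable fun q : E₁ × E₁ ↦
      ENNReal.ofReal (realGaussian (b / 2) (q.2 + latticePoint n - q.1)) :=
    ENNReal.measurable_ofReal.comp (Continuous.measurable (by fun_prop))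
  exact hmeas.lintegral_prod_right'.const_mul _

theorem ofReal_realGaussian_le_cubeGaussian {b : ℝ} (hb : 0 ≤ b) (n : Fin d → ℤ) (w : E₁)
    {x : E₁} (hx : x ∈ unitCube d) :
    ENNReal.ofReal (realGaussian b (x + latticePoint n - w)) ≤ cubeGaussian b n w := by
  have hpoint {y : E₁} (hy : y ∈ unitCube d) : realGaussian b (x + latticePoint n - w) ≤
      Real.exp (b * d) * realGaussian (b / 2) (y + latticePoint n - w) := by
    refine (realGaussian.le_exp_mul hb _ (y + latticePoint n - w)).trans ?_
    rw [sub_sub_sub_cancel_right, add_sub_add_right_eq_sub]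
    gcongr
    · exact (realGaussian.pos _ _).le
    · exact norm_sub_sq_le_of_mem_unitCube hx hy
  calc ENNReal.ofReal (realGaussian b (x + latticePoint n - w))
      = ∫⁻ _ in unitCube d, ENNReal.ofReal (realGaussian b (x + latticePoint n - w)) := by
        rw [setLIntegral_const, volume_unitCube, mul_one]
    _ ≤ ∫⁻ y in unitCube d, ENNReal.ofReal (Real.exp (b * d)) *
          ENNReal.ofReal (realGaussian (b / 2) (y + latticePoint n - w)) := by
        refine setLIntegral_mono' measurableSet_unitCube fun y hy ↦ ?_
        rw [← ENNReal.ofReal_mul (Real.exp_pos _).le]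
        exact ENNReal.ofReal_le_ofReal (hpoint hy)
    _ = cubeGaussian b n w := lintegral_const_mul' _ _ ENNReal.ofReal_ne_top

theorem tsum_cubeGaussian (b : ℝ) (w : E₁) :
    ∑' n, cubeGaussian b n w = cubeGaussianMass d b := by
  have hmeas : Measurable fun x ↦ ENNReal.ofReal (realGaussian (b / 2) (x - w)) :=
    ENNReal.measurable_ofReal.comp (Continuous.measurable (by fun_prop))
  simp only [cubeGaussian, cubeGaussianMass]
  rw [ENNReal.tsum_mul_left, tsum_setLIntegral_unitCube_add_latticePoint hmeas,
    lintegral_sub_right_eq_self (fun x ↦ ENNReal.ofReal (realGaussian (b / 2) x))]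

theorem lintegral_cubeGaussian (b : ℝ) (n : Fin d → ℤ) :
    ∫⁻ w, cubeGaussian b n w = cubeGaussianMass d b := by
  have hmeas : Measurable fun q : E₁ × E₁ ↦
      ENNReal.ofReal (realGaussian (b / 2) (q.2 + latticePoint n - q.1)) :=
    ENNReal.measurable_ofReal.comp (Continuous.measurable (by fun_prop))
  simp only [cubeGaussian, cubeGaussianMass]
  rw [lintegral_const_mul' _ _ ENNReal.ofReal_ne_top, lintegral_lintegral_swap hmeas.aemeasurable]
  simp only [lintegral_sub_left_eq_self (fun x ↦ ENNReal.ofReal (realGaussian (b / 2) x)),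
    setLIntegral_const, volume_unitCube, mul_one]

theorem localL2_mul_realGaussian_le {g : E₁ → ℂ} (hg : Measurable g) {b : ℝ} (hb : 0 ≤ b)
    (n : Fin d → ℤ) (w : E₁) :
    localL2 (fun t ↦ g t * (realGaussian b (t - w) : ℂ)) n ≤ cubeGaussian b n w * localL2 g n := by
  refine eLpNorm_le_mul_eLpNorm_of_ae_le_mul'' 2
    (hg.comp (measurable_add_const _)).aestronglyMeasurable
    (ae_restrict_of_forall_mem measurableSet_unitCube fun x hx ↦ ?_)
  rw [enorm_mul, enorm_realGaussian, mul_comm]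
  gcongr
  exact ofReal_realGaussian_le_cubeGaussian hb n w hx

theorem eLpNorm_two_mul_realGaussian_le_tsum {g : E₁ → ℂ} (hg : Measurable g) {b : ℝ}
    (hb : 0 ≤ b) (w : E₁) :
    eLpNorm (fun t ↦ g t * (realGaussian b (t - w) : ℂ)) 2 ≤
      ∑' k, cubeGaussian b k w * localL2 g k := by
  have hmeas : Measurable fun t ↦ g t * (realGaussian b (t - w) : ℂ) :=
    hg.mul (Continuous.measurable (by fun_prop))
  exact (eLpNorm_two_le_tsum_localL2 hmeas).trans <|
    ENNReal.tsum_le_tsum fun k ↦ localL2_mul_realGaussian_le hg hb k w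

end CubeGaussian

section LatticeKernel

variable {d : ℕ} {α : Type*} [MeasurableSpace α] {ν : Measure α} {N : α → ℝ≥0∞}
  {τ : α → EuclideanSpace ℝ (Fin d)}

local notation "E₁" => EuclideanSpace ℝ (Fin d)

/-- The matrix that dominates a Weyl operator between the unit cubes at `k` and `n`: a phase-space
shift indexed by `ζ : α` carries the cube at `k` to the cube at `n` through a midpoint `u`, moving
by `τ ζ` on either side of it, with strength `N ζ`. -/
noncomputable def latticeKernel (ν : Measure α) (b : ℝ) (N : α → ℝ≥0∞)
    (τ : α → EuclideanSpace ℝ (Fin d)) (n k : Fin d → ℤ) : ℝ≥0∞ :=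
  ∫⁻ ζ, N ζ * (∫⁻ u, cubeGaussian b n (u - τ ζ) * cubeGaussian b k (u + τ ζ)) ∂ν

theorem latticeKernel_neg (b : ℝ) (n k : Fin d → ℤ) :
    latticeKernel ν b N (-τ) n k = latticeKernel ν b N τ k n := by
  simp only [latticeKernel, Pi.neg_apply, sub_neg_eq_add, ← sub_eq_add_neg, mul_comm]

theorem measurable_cubeGaussian_mul_cubeGaussian (hτ : Measurable τ) (b : ℝ) (n k : Fin d → ℤ) :
    Measurable fun q : α × E₁ ↦ cubeGaussian b n (q.2 - τ q.1) * cubeGaussian b k (q.2 + τ q.1) :=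
  ((measurable_cubeGaussian b n).comp (measurable_snd.sub (hτ.comp measurable_fst))).mul
    ((measurable_cubeGaussian b k).comp (measurable_snd.add (hτ.comp measurable_fst)))

theorem tsum_lintegral_cubeGaussian_mul_cubeGaussian (b : ℝ) (n : Fin d → ℤ) (w : E₁) :
    ∑' k, ∫⁻ u, cubeGaussian b n (u - w) * cubeGaussian b k (u + w) =
      cubeGaussianMass d b ^ 2 := by
  have hmeas (k : Fin d → ℤ) :
      Measurable fun u ↦ cubeGaussian b n (u - w) * cubeGaussian b k (u + w) :=
    ((measurable_cubeGaussian b n).comp (measurable_sub_const w)).mul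
      ((measurable_cubeGaussian b k).comp (measurable_add_const w))
  rw [← lintegral_tsum fun k ↦ (hmeas k).aemeasurable]
  simp only [ENNReal.tsum_mul_left, tsum_cubeGaussian]
  rw [lintegral_sub_right_eq_self (fun u ↦ cubeGaussian b n u * cubeGaussianMass d b),
    lintegral_mul_const _ (measurable_cubeGaussian b n), lintegral_cubeGaussian, sq]

theorem tsum_latticeKernel_right (hN : Measurable N) (hτ : Measurable τ) (b : ℝ) (n : Fin d → ℤ) :
    ∑' k, latticeKernel ν b N τ n k = cubeGaussianMass d b ^ 2 * ∫⁻ ζ, N ζ ∂ν := by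
  have hmeas (k : Fin d → ℤ) : Measurable fun ζ ↦
      N ζ * ∫⁻ u, cubeGaussian b n (u - τ ζ) * cubeGaussian b k (u + τ ζ) :=
    hN.mul (measurable_cubeGaussian_mul_cubeGaussian hτ b n k).lintegral_prod_right'
  unfold latticeKernel
  rw [← lintegral_tsum fun k ↦ (hmeas k).aemeasurable]
  simp only [ENNReal.tsum_mul_left, tsum_lintegral_cubeGaussian_mul_cubeGaussian]
  rw [lintegral_mul_const _ hN, mul_comm]

theorem tsum_latticeKernel_left (hN : Measurable N) (hτ : Measurable τ) (b : ℝ)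
    (k : Fin d → ℤ) :
    ∑' n, latticeKernel ν b N τ n k = cubeGaussianMass d b ^ 2 * ∫⁻ ζ, N ζ ∂ν := by
  simpa only [latticeKernel_neg] using tsum_latticeKernel_right (ν := ν) hN hτ.neg b k

theorem lintegral_prod_cubeGaussian_mul_tsum [SFinite ν] (hN : Measurable N)
    (hτ : Measurable τ) (b : ℝ) (n : Fin d → ℤ) (a : (Fin d → ℤ) → ℝ≥0∞) :
    ∫⁻ q : α × E₁, cubeGaussian b n (q.2 - τ q.1) *
        (N q.1 * ∑' k, cubeGaussian b k (q.2 + τ q.1) * a k) ∂ν.prod volume =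
      ∑' k, latticeKernel ν b N τ n k * a k := by
  have hmeas (k : Fin d → ℤ) := measurable_cubeGaussian_mul_cubeGaussian hτ b n k
  have hmeasN (k : Fin d → ℤ) : Measurable fun q : α × E₁ ↦
      N q.1 * (cubeGaussian b n (q.2 - τ q.1) * cubeGaussian b k (q.2 + τ q.1)) :=
    (hN.comp measurable_fst).mul (hmeas k)
  have hkernel (k : Fin d → ℤ) : latticeKernel ν b N τ n k = ∫⁻ q : α × E₁,
      N q.1 * (cubeGaussian b n (q.2 - τ q.1) * cubeGaussian b k (q.2 + τ q.1))
        ∂ν.prod volume := by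
    rw [lintegral_prod _ (hmeasN k).aemeasurable]
    exact lintegral_congr fun ζ ↦
      (lintegral_const_mul _ ((hmeas k).comp measurable_prodMk_left)).symm
  simp only [hkernel, ← lintegral_mul_const _ (hmeasN _)]
  rw [← lintegral_tsum fun k ↦ ((hmeasN k).mul_const _).aemeasurable]
  refine lintegral_congr fun q ↦ ?_
  simp only [← ENNReal.tsum_mul_left]
  exact tsum_congr fun k ↦ by ring

theorem eLpNorm_tsum_latticeKernel_mul_le (hN : Measurable N) (hτ : Measurable τ) (b : ℝ)
    {s : ℝ≥0∞} (hs : 1 ≤ s) (a : (Fin d → ℤ) → ℝ≥0∞) :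
    eLpNorm (fun n ↦ ∑' k, latticeKernel ν b N τ n k * a k) s .count ≤
      cubeGaussianMass d b ^ 2 * (∫⁻ ζ, N ζ ∂ν) * eLpNorm a s .count := by
  have hrow (n : Fin d → ℤ) := (tsum_latticeKernel_right (ν := ν) hN hτ b n).le
  have hcol (k : Fin d → ℤ) := (tsum_latticeKernel_left (ν := ν) hN hτ b k).le
  simp only [← lintegral_count] at hrow hcol ⊢
  exact eLpNorm_lintegral_mul_le_of_schur (measurable_of_countable _) hrow hcol hs
    (measurable_of_countable _)

end LatticeKernel

section WeylLocal

variable {d : ℕ}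

local notation "E₁" => EuclideanSpace ℝ (Fin d)
local notation "E₂" => EuclideanSpace ℝ (Fin d ⊕ Fin d)

variable (σ : 𝓢(EuclideanSpace ℝ (Fin d ⊕ Fin d), ℂ)) (f : 𝓢(EuclideanSpace ℝ (Fin d), ℂ))

theorem localL2_fourierInv_weylSlice_mul_realGaussian_le (n : Fin d → ℤ) (ζ : E₂) (u : E₁) :
    localL2 (fun x ↦ 𝓕⁻ (weylSlice σ f ζ u) x *
        (realGaussian Real.pi (x - (u - (2 : ℝ)⁻¹ • wpart ζ)) : ℂ)) n ≤
      cubeGaussian Real.pi n (u - (2 : ℝ)⁻¹ • wpart ζ) *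
        (supSTFT σ ζ *
          ∑' k, cubeGaussian Real.pi k (u + (2 : ℝ)⁻¹ • wpart ζ) * localL2 f k) := by
  have hmeas : Measurable (𝓕⁻ (weylSlice σ f ζ u)) :=
    (measurable_fourierInv_weylSlice σ f).comp (f := fun x ↦ (x, ζ, u)) (by fun_prop)
  refine (localL2_mul_realGaussian_le hmeas Real.pi_pos.le n _).trans (mul_le_mul_right ?_ _)
  refine (localL2_le_eLpNorm_two hmeas.aestronglyMeasurable n).trans ?_
  refine (eLpNorm_two_fourierInv_weylSlice_le σ f ζ u).trans (mul_le_mul_right ?_ _)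
  exact eLpNorm_two_mul_realGaussian_le_tsum f.continuous.measurable Real.pi_pos.le _

theorem measurable_enorm_fourierInv_weylSlice_mul_realGaussian :
    Measurable fun p : E₁ × (E₂ × E₁) ↦ ‖𝓕⁻ (weylSlice σ f p.2.1 p.2.2) p.1 *
      (realGaussian Real.pi (p.1 - (p.2.2 - (2 : ℝ)⁻¹ • wpart p.2.1)) : ℂ)‖ₑ :=
  ((measurable_fourierInv_weylSlice σ f).mul (Continuous.measurable (by fun_prop))).enorm

theorem enorm_weylOp_le_mul_lintegral_prod (x : E₁) :
    ‖weylOp σ f x‖ₑ ≤ (ENNReal.ofReal (∫ v : E₂, realGaussian (3 * Real.pi) v))⁻¹ *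
      ∫⁻ q : E₂ × E₁, ‖𝓕⁻ (weylSlice σ f q.1 q.2) x *
        (realGaussian Real.pi (x - (q.2 - (2 : ℝ)⁻¹ • wpart q.1)) : ℂ)‖ₑ := by
  have hpos : 0 < ∫ v : E₂, realGaussian (3 * Real.pi) v :=
    realGaussian.integral_pos (by positivity)
  have hmeas : Measurable fun q : E₂ × E₁ ↦ ‖𝓕⁻ (weylSlice σ f q.1 q.2) x *
      (realGaussian Real.pi (x - (q.2 - (2 : ℝ)⁻¹ • wpart q.1)) : ℂ)‖ₑ :=
    (measurable_enorm_fourierInv_weylSlice_mul_realGaussian σ f).comp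
      (f := fun q ↦ (x, q)) (by fun_prop)
  rw [← ENNReal.mul_le_iff_le_inv (ENNReal.ofReal_pos.2 hpos).ne' ENNReal.ofReal_ne_top,
    Measure.volume_eq_prod, lintegral_prod _ hmeas.aemeasurable]
  refine (enorm_weylOp_le σ f x).trans_eq (lintegral_congr fun ζ ↦ lintegral_congr fun u ↦ ?_)
  rw [enorm_mul, enorm_realGaussian, mul_comm, sub_sub_eq_add_sub]

theorem localL2_weylOp_le (n : Fin d → ℤ) :
    localL2 (weylOp σ f) n ≤ (ENNReal.ofReal (∫ v : E₂, realGaussian (3 * Real.pi) v))⁻¹ *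
      ∑' k, latticeKernel volume Real.pi (supSTFT σ) (fun ζ ↦ (2 : ℝ)⁻¹ • wpart ζ) n k *
        localL2 f k := by
  have hτ : Measurable fun ζ : E₂ ↦ (2 : ℝ)⁻¹ • (wpart ζ : E₁) :=
    Continuous.measurable (by fun_prop)
  rw [← lintegral_prod_cubeGaussian_mul_tsum (measurable_supSTFT σ.integrable) hτ]
  refine (localL2_le_mul_lintegral (measurable_enorm_fourierInv_weylSlice_mul_realGaussian σ f)
    (enorm_weylOp_le_mul_lintegral_prod σ f) n).trans ?_
  refine mul_le_mul_right (lintegral_mono fun q ↦ ?_) _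
  exact localL2_fourierInv_weylSlice_mul_realGaussian_le σ f n q.1 q.2

theorem wNorm_two_weylOp_le {s : ℝ≥0∞} (hs : 1 ≤ s) :
    wNorm d 2 s (weylOp σ f) ≤
      (ENNReal.ofReal (∫ v : E₂, realGaussian (3 * Real.pi) v))⁻¹ *
        (cubeGaussianMass d Real.pi ^ 2 * modNorm ∞ 1 σ * wNorm d 2 s f) := by
  have hs0 : s ≠ 0 := (zero_lt_one.trans_le hs).ne'
  have hτ : Measurable fun ζ : E₂ ↦ (2 : ℝ)⁻¹ • (wpart ζ : E₁) :=
    Continuous.measurable (by fun_prop)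
  rw [wNorm_two_eq_eLpNorm_localL2 hs0, wNorm_two_eq_eLpNorm_localL2 hs0,
    ← lintegral_supSTFT σ.integrable]
  have hschur := eLpNorm_tsum_latticeKernel_mul_le (ν := volume)
    (measurable_supSTFT σ.integrable) hτ Real.pi hs (localL2 f)
  refine le_trans ?_ (mul_le_mul_right hschur _)
  exact eLpNorm_le_mul_eLpNorm_of_ae_le_mul'' s (measurable_of_countable _).aestronglyMeasurable
    (.of_forall (localL2_weylOp_le σ f))

end WeylLocal

/-- Weyl operators with symbols in the Sjöstrand class `M^{∞,1}` are
bounded on `W(L²,L^s)`. -/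
theorem weyl_sjostrand_bounded_on_W_L2_Ls (d : ℕ) (s : ℝ≥0∞) (hs : 1 ≤ s) :
    ∃ C : ℝ, 0 < C ∧
      ∀ (σ : SchwartzMap (EuclideanSpace ℝ (Fin d ⊕ Fin d)) ℂ)
        (f : SchwartzMap (EuclideanSpace ℝ (Fin d)) ℂ),
        wNorm d 2 s (weylOp ⇑σ ⇑f) ≤
          ENNReal.ofReal C * modNorm ∞ 1 ⇑σ * wNorm d 2 s ⇑f := by
  set A := (ENNReal.ofReal (∫ v : EuclideanSpace ℝ (Fin d ⊕ Fin d),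
    realGaussian (3 * Real.pi) v))⁻¹ * cubeGaussianMass d Real.pi ^ 2 with hA
  have hA_top : A ≠ ∞ := by
    have hpos : 0 < ∫ v : EuclideanSpace ℝ (Fin d ⊕ Fin d), realGaussian (3 * Real.pi) v :=
      realGaussian.integral_pos (by positivity)
    exact ENNReal.mul_ne_top (ENNReal.inv_ne_top.2 (ENNReal.ofReal_pos.2 hpos).ne')
      (ENNReal.pow_ne_top (cubeGaussianMass_lt_top Real.pi_pos).ne)
  have hA_le : A ≤ ENNReal.ofReal (A.toReal + 1) :=
    (ENNReal.le_ofReal_iff_toReal_le hA_top (by positivity)).2 (by linarith)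
  refine ⟨A.toReal + 1, by positivity, fun σ f ↦ ?_⟩
  calc wNorm d 2 s (weylOp σ f) ≤ A * modNorm ∞ 1 σ * wNorm d 2 s f := by
        simpa only [hA, mul_assoc] using wNorm_two_weylOp_le σ f hs
    _ ≤ ENNReal.ofReal (A.toReal + 1) * modNorm ∞ 1 σ * wNorm d 2 s f := by gcongr
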